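/- Let a, b, c be integers with 2 < a ≤ b ≤ c, and let k be a positive integer with k ≤ (a+1)(b+1)(c+1)/(a+b+c+1) − c − 1. Then the Segre product ℙ^a × ℙ^b × ℙ^c (tensors in ℂ^{a+1} ⊗ ℂ^{b+1} ⊗ ℂ^{c+1}) is k-identifiable. -/

import Mathlib

open scoped TensorProduct
open PiTensorProduct

noncomputable section

/-- The space of tensors `V = ℂ^{a₁+1} ⊗ ⋯ ⊗ ℂ^{a_q+1}`. -/
abbrev Ten (q : ℕ) (a : Fin q → ℕ) : Type :=
  ⨂[ℂ] i : Fin q, (Fin (a i + 1) → ℂ)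

/-- Index type for the coordinates on the parameter space `W_k`. -/
abbrev WIdx (q : ℕ) (a : Fin q → ℕ) (k : ℕ) : Type :=
  Fin k × Σ j : Fin q, Fin (a j + 1)

/-- Index type for the standard (decomposable) basis of `Ten q a`. -/
abbrev BIdx (q : ℕ) (a : Fin q → ℕ) : Type := ∀ j : Fin q, Fin (a j + 1)

/-- A tensor is decomposable if it is `v₁ ⊗ ⋯ ⊗ v_q` with all `vᵢ ≠ 0`. -/
def IsDecomposable {q : ℕ} {a : Fin q → ℕ} (t : Ten q a) : Prop :=
  ∃ v : ∀ j : Fin q, Fin (a j + 1) → ℂ, (∀ j, v j ≠ 0) ∧ t = tprod ℂ v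

/-- The affine tangent space at `v₁ ⊗ ⋯ ⊗ v_q` to the cone over the Segre variety:
the span of all tensors obtained by replacing one factor of `v` by an arbitrary vector. -/
def tangent {q : ℕ} (a : Fin q → ℕ) (v : ∀ j : Fin q, Fin (a j + 1) → ℂ) :
    Submodule ℂ (Ten q a) :=
  Submodule.span ℂ
    {x | ∃ (j : Fin q) (u : Fin (a j + 1) → ℂ), x = tprod ℂ (Function.update v j u)}

/-- The map `Φ : W_k → V` sending a `k`-tuple of factor vectors to the sum of the
corresponding decomposable tensors. -/
def Phi {q : ℕ} (a : Fin q → ℕ) {k : ℕ}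
    (p : Fin k → ∀ j : Fin q, Fin (a j + 1) → ℂ) : Ten q a :=
  ∑ i, tprod ℂ (p i)

/-- Evaluation of a polynomial function on `W_k` at a parameter point. -/
def evalW {q : ℕ} {a : Fin q → ℕ} {k : ℕ}
    (F : MvPolynomial (WIdx q a k) ℂ)
    (p : Fin k → ∀ j : Fin q, Fin (a j + 1) → ℂ) : ℂ :=
  MvPolynomial.eval (fun x => p x.1 x.2.1 x.2.2) F

/-- `k`-identifiability of the Segre product `ℙ^{a₁} × ⋯ × ℙ^{a_q}`:
there is a nonzero polynomial function `F` on `W_k` such that whenever `F(p) ≠ 0`,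
the tensor `Φ(p)` has a rank-`k` decomposition, and any two rank-`k` decompositions
of `Φ(p)` agree as multisets of decomposable tensors. -/
def Identifiable (q : ℕ) (a : Fin q → ℕ) (k : ℕ) : Prop :=
  ∃ F : MvPolynomial (WIdx q a k) ℂ,
    (∃ p, evalW F p ≠ 0) ∧
    ∀ p, evalW F p ≠ 0 →
      ((∃ t : Fin k → Ten q a, (∀ i, IsDecomposable (t i)) ∧ ∑ i, t i = Phi a p) ∧
       ∀ s t : Fin k → Ten q a,
         (∀ i, IsDecomposable (s i)) → (∀ i, IsDecomposable (t i)) →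
         ∑ i, s i = Phi a p → ∑ i, t i = Phi a p →
         Finset.univ.val.map s = Finset.univ.val.map t)

/-- The standard decomposable basis vector of `Ten q a` indexed by `f`. -/
def basisVec {q : ℕ} (a : Fin q → ℕ) (f : BIdx q a) : Ten q a :=
  tprod ℂ fun j => Pi.single (f j) 1

/-- The vector of `Ten q a` with coordinates `c` in the standard basis. -/
def fromCoords {q : ℕ} (a : Fin q → ℕ) (c : BIdx q a → ℂ) : Ten q a :=
  ∑ f : BIdx q a, c f • basisVec a f

/-- Evaluation of a polynomial function on `W_k × V^e` at a parameter point. -/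
def evalWV {q : ℕ} {a : Fin q → ℕ} {k e : ℕ}
    (F : MvPolynomial (WIdx q a k ⊕ (Fin e × BIdx q a)) ℂ)
    (p : Fin k → ∀ j : Fin q, Fin (a j + 1) → ℂ)
    (c : Fin e → BIdx q a → ℂ) : ℂ :=
  MvPolynomial.eval (Sum.elim (fun x => p x.1 x.2.1 x.2.2) (fun y => c y.1 y.2)) F

/-- `TangentGeneral q a k d` says: the general linear subspace of `V` of dimension `d`
which is tangent to the Segre at `k` general points is tangent only at those points.
Concretely, with `e = d - k(1 + Σᵢ aᵢ)`, there is a nonzero polynomial function `F` on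
`W_k × V^e` such that whenever `F ≠ 0` at `(p, c)`, the space `L` spanned by the tangent
spaces at the `k` decomposable tensors determined by `p` together with the `e` extra
vectors determined by `c` has dimension exactly `d`, and any decomposable tensor whose
tangent space lies in `L` is a scalar multiple of one of the `k` given ones. -/
def TangentGeneral (q : ℕ) (a : Fin q → ℕ) (k d : ℕ) : Prop :=
  ∃ F : MvPolynomial (WIdx q a k ⊕ (Fin (d - k * (1 + ∑ j, a j)) × BIdx q a)) ℂ,
    (∃ p c, evalWV F p c ≠ 0) ∧
    ∀ p c, evalWV F p c ≠ 0 →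
      (Module.finrank ℂ
          ↥((⨆ i, tangent a (p i)) ⊔
            Submodule.span ℂ (Set.range fun m => fromCoords a (c m))) = d ∧
       ∀ w : ∀ j : Fin q, Fin (a j + 1) → ℂ, (∀ j, w j ≠ 0) →
         tangent a w ≤
           (⨆ i, tangent a (p i)) ⊔
             Submodule.span ℂ (Set.range fun m => fromCoords a (c m)) →
         ∃ (i : Fin k) (t : ℂ), tprod ℂ w = t • tprod ℂ (p i))

namespace SegreContact

section Basic

variable {ι α β γ : Type*} [Fintype ι]

/-- The general element `∑ᵢ (aᵢ ⊗ vᵢ ⊗ wᵢ + uᵢ ⊗ bᵢ ⊗ wᵢ + uᵢ ⊗ vᵢ ⊗ cᵢ)` of the sum of the tangent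
spaces to the Segre cone at the points `uᵢ ⊗ vᵢ ⊗ wᵢ`, in coordinates. If `wᵢ = 0` the `i`-th
summand is the fibre `uᵢ ⊗ vᵢ ⊗ K^γ`. -/
def tangentSum {K : Type*} [CommRing K] (u : ι → α → K) (v : ι → β → K) (w : ι → γ → K)
    (a : ι → α → K) (b : ι → β → K) (c : ι → γ → K) : α → β → γ → K :=
  fun x y z => ∑ i, (a i x * v i y * w i z + u i x * b i y * w i z + u i x * v i y * c i z)

/-- Membership in the sum of the tangent spaces. -/
def InTangent {K : Type*} [CommRing K] (u : ι → α → K) (v : ι → β → K) (w : ι → γ → K)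
    (t : α → β → γ → K) : Prop :=
  ∃ a b c, tangentSum u v w a b c = t

/-- The three kinds of tangent directions at `x ⊗ y ⊗ z` all lie in the sum of tangent spaces. -/
def IsContact {K : Type*} [CommRing K] (u : ι → α → K) (v : ι → β → K) (w : ι → γ → K)
    (x : α → K) (y : β → K) (z : γ → K) : Prop :=
  (∀ e : α → K, InTangent u v w fun r s q => e r * y s * z q) ∧
  (∀ e : β → K, InTangent u v w fun r s q => x r * e s * z q) ∧
  (∀ e : γ → K, InTangent u v w fun r s q => x r * y s * e q)

/-- The linearization of `IsContact` at the `i`-th point in the direction `(x, y, z)`. -/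
def IsContactDir {K : Type*} [CommRing K] (u : ι → α → K) (v : ι → β → K) (w : ι → γ → K)
    (i : ι) (x : α → K) (y : β → K) (z : γ → K) : Prop :=
  (∀ e : α → K, InTangent u v w fun r s q => e r * (y s * w i q + v i s * z q)) ∧
  (∀ e : β → K, InTangent u v w fun r s q => e s * (x r * w i q + u i r * z q)) ∧
  (∀ e : γ → K, InTangent u v w fun r s q => (x r * v i s + u i r * y s) * e q)

/-- The tangent spaces are as independent as possible, and the contact locus of their sum
consists exactly of the points with `wᵢ ≠ 0`, each of them reduced. -/
structure Good {K : Type*} [Field K] (u : ι → α → K) (v : ι → β → K) (w : ι → γ → K) : Prop where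
  indep : ∀ a b c, tangentSum u v w a b c = 0 → ∀ i, (w i = 0 → c i = 0) ∧
    (w i ≠ 0 → ∃ l m : K, a i = l • u i ∧ b i = m • v i ∧ c i = (-(l + m)) • w i)
  contact : ∀ x y z, x ≠ 0 → y ≠ 0 → z ≠ 0 → IsContact u v w x y z →
    ∃ i, w i ≠ 0 ∧ ∃ l m n : K, x = l • u i ∧ y = m • v i ∧ z = n • w i
  reduced : ∀ i, w i ≠ 0 → ∀ x y z, IsContactDir u v w i x y z →
    ∃ l m n : K, x = l • u i ∧ y = m • v i ∧ z = n • w i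

variable {K : Type*} [CommRing K] {u : ι → α → K} {v : ι → β → K} {w : ι → γ → K}

theorem tangentSum_smul (s : K) (a : ι → α → K) (b : ι → β → K) (c : ι → γ → K) :
    tangentSum u v w (s • a) (s • b) (s • c) = s • tangentSum u v w a b c := by
  funext x y z
  simp only [tangentSum, Pi.smul_apply, smul_eq_mul, Finset.mul_sum]
  exact Finset.sum_congr rfl fun i _ => by ring

theorem InTangent.add {t t' : α → β → γ → K} (h : InTangent u v w t) (h' : InTangent u v w t') :
    InTangent u v w (fun x y z => t x y z + t' x y z) := by
  obtain ⟨a, b, c, rfl⟩ := h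
  obtain ⟨a', b', c', rfl⟩ := h'
  refine ⟨a + a', b + b', c + c', ?_⟩
  funext x y z
  simp only [tangentSum, Pi.add_apply, ← Finset.sum_add_distrib]
  exact Finset.sum_congr rfl fun i _ => by ring

theorem InTangent.smul (s : K) {t : α → β → γ → K} (h : InTangent u v w t) :
    InTangent u v w (fun x y z => s * t x y z) := by
  obtain ⟨a, b, c, rfl⟩ := h
  exact ⟨s • a, s • b, s • c, tangentSum_smul s a b c⟩

theorem InTangent.sub {t t' : α → β → γ → K} (h : InTangent u v w t) (h' : InTangent u v w t') :
    InTangent u v w (fun x y z => t x y z - t' x y z) := by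
  simpa [sub_eq_add_neg] using h.add (h'.smul (-1))

theorem InTangent.congr {t t' : α → β → γ → K} (h : InTangent u v w t)
    (e : ∀ x y z, t x y z = t' x y z) : InTangent u v w t' := by
  have : t = t' := by funext x y z; exact e x y z
  exact this ▸ h

theorem isContact_self (i : ι) : IsContact u v w (u i) (v i) (w i) := by
  classical
  refine ⟨fun e => ⟨Pi.single i e, 0, 0, ?_⟩, fun e => ⟨0, Pi.single i e, 0, ?_⟩,
    fun e => ⟨0, 0, Pi.single i e, ?_⟩⟩ <;>
  · funext x y z
    simp only [tangentSum]
    rw [Finset.sum_eq_single i]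
    · simp
    · intro j _ hj
      simp [Pi.single_eq_of_ne hj]
    · simp

end Basic

section Specialization

variable {K : Type*} [Field K] (O : ValuationSubring K)

theorem exists_primitive_scaling {S₁ S₂ S₃ : Type*} [Finite S₁] [Finite S₂] [Finite S₃]
    (f : S₁ → K) (g : S₂ → K) (h : S₃ → K)
    (hne : ¬ ((∀ s, f s = 0) ∧ (∀ s, g s = 0) ∧ (∀ s, h s = 0))) :
    ∃ c : K, c ≠ 0 ∧ (∀ s, c * f s ∈ O) ∧ (∀ s, c * g s ∈ O) ∧ (∀ s, c * h s ∈ O) ∧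
      ((∃ s, c * f s = 1) ∨ (∃ s, c * g s = 1) ∨ (∃ s, c * h s = 1)) := by
  let F : S₁ ⊕ S₂ ⊕ S₃ → K := Sum.elim f (Sum.elim g h)
  have hF : ∃ s, F s ≠ 0 := by
    by_contra! H
    exact hne ⟨fun s => H (.inl s), fun s => H (.inr (.inl s)), fun s => H (.inr (.inr s))⟩
  obtain ⟨t, ht⟩ := hF
  have : Nonempty (S₁ ⊕ S₂ ⊕ S₃) := ⟨t⟩
  obtain ⟨s₀, hs₀⟩ := Finite.exists_max fun s => O.valuation (F s)
  have h0 : F s₀ ≠ 0 := by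
    intro h
    have := hs₀ t
    simp [h, ht] at this
  have hmem : ∀ s, (F s₀)⁻¹ * F s ∈ O := by
    intro s
    rw [← O.valuation_le_one_iff, map_mul, map_inv₀]
    have hv : O.valuation (F s₀) ≠ 0 := by simpa using h0
    rw [inv_mul_le_iff₀ (zero_lt_iff.mpr hv), mul_one]
    exact hs₀ s
  refine ⟨(F s₀)⁻¹, inv_ne_zero h0, fun s => hmem (.inl s), fun s => hmem (.inr (.inl s)),
    fun s => hmem (.inr (.inr s)), ?_⟩
  have h1 := inv_mul_cancel₀ h0
  rcases s₀ with s | s | s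
  · exact .inl ⟨s, h1⟩
  · exact .inr (.inl ⟨s, h1⟩)
  · exact .inr (.inr ⟨s, h1⟩)

end Specialization

section Specialization
open IsLocalRing

variable {ι α β γ : Type*}
variable {K : Type*} [Field K] (O : ValuationSubring K)

variable {u : ι → α → O} {v : ι → β → O} {w : ι → γ → O}

/-- Reduction of a family of vectors modulo the maximal ideal. -/
abbrev red {σ : Type*} (u : ι → σ → O) : ι → σ → ResidueField O := fun i x => residue O (u i x)

/-- A family of integral vectors, viewed over the fraction field. -/
abbrev gen {σ : Type*} (u : ι → σ → O) : ι → σ → K := fun i x => (u i x : K)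

/-- The reductions of the `uᵢ` and `vᵢ` are nonzero, and those of the `wᵢ` vanish only where
`wᵢ` does. -/
structure Nondegenerate (u : ι → α → O) (v : ι → β → O) (w : ι → γ → O) (p : ι → α) (q : ι → β) :
    Prop where
  left : ∀ i, red O u i (p i) ≠ 0
  mid : ∀ i, red O v i (q i) ≠ 0
  right : ∀ i, w i = 0 ∨ red O w i ≠ 0

variable {O} {p : ι → α} {q : ι → β}

theorem coe_ne_zero_of_residue_ne_zero {x : O} (h : residue O x ≠ 0) : (x : K) ≠ 0 := by
  intro h'
  apply h
  have : x = 0 := Subtype.ext h'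
  simp [this]

theorem gen_eq_zero_iff {τ σ : Type*} {w : τ → σ → O} {i : τ} : gen O w i = 0 ↔ w i = 0 := by
  constructor
  · intro h
    funext z
    exact Subtype.ext (congrFun h z)
  · intro h
    funext z
    simp [gen, h]

theorem red_eq_zero_iff (hn : Nondegenerate O u v w p q) {i : ι} :
    red O w i = 0 ↔ gen O w i = 0 := by
  rw [gen_eq_zero_iff]
  constructor
  · intro h
    exact (hn.right i).resolve_right (fun h' => h' h)
  · intro h
    funext z
    simp [red, h]

/-- Coefficients normalized by having vanishing pivot entries. -/
structure Normalized (w : ι → γ → O) (p : ι → α) (q : ι → β) (a : ι → α → K) (b : ι → β → K) :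
    Prop where
  left_pivot : ∀ i, a i (p i) = 0
  mid_pivot : ∀ i, b i (q i) = 0
  left_zero : ∀ i, gen O w i = 0 → a i = 0
  mid_zero : ∀ i, gen O w i = 0 → b i = 0

theorem Normalized.smul {a : ι → α → K} {b : ι → β → K} (h : Normalized w p q a b) (s : K) :
    Normalized w p q (fun i x => s * a i x) (fun i y => s * b i y) where
  left_pivot i := by simp [h.left_pivot i]
  mid_pivot i := by simp [h.mid_pivot i]
  left_zero i hi := by funext x; simp [h.left_zero i hi]
  mid_zero i hi := by funext x; simp [h.mid_zero i hi]

variable [Fintype ι]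

theorem tangentSum_gen (a : ι → α → O) (b : ι → β → O) (c : ι → γ → O) (x : α) (y : β) (z : γ) :
    tangentSum (gen O u) (gen O v) (gen O w) (gen O a) (gen O b) (gen O c) x y z =
      ((tangentSum u v w a b c x y z : O) : K) := by
  simp [tangentSum]

theorem tangentSum_red (a : ι → α → O) (b : ι → β → O) (c : ι → γ → O) (x : α) (y : β) (z : γ) :
    tangentSum (red O u) (red O v) (red O w) (red O a) (red O b) (red O c) x y z =
      residue O (tangentSum u v w a b c x y z) := by
  simp [tangentSum, map_sum]

theorem exists_normalized (hn : Nondegenerate O u v w p q)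
    (a : ι → α → K) (b : ι → β → K) (c : ι → γ → K) :
    ∃ (a' : ι → α → K) (b' : ι → β → K) (c' : ι → γ → K),
      Normalized w p q a' b' ∧
      tangentSum (gen O u) (gen O v) (gen O w) a' b' c' =
        tangentSum (gen O u) (gen O v) (gen O w) a b c ∧
      ∀ i, (gen O w i = 0 → c' i = c i) ∧ (gen O w i ≠ 0 → ∃ l m : K,
        a i = a' i + l • gen O u i ∧ b i = b' i + m • gen O v i ∧
        c i = c' i + (-(l + m)) • gen O w i) := by
  classical
  have hu : ∀ i, gen O u i (p i) ≠ 0 := fun i => coe_ne_zero_of_residue_ne_zero (hn.left i)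
  have hv : ∀ i, gen O v i (q i) ≠ 0 := fun i => coe_ne_zero_of_residue_ne_zero (hn.mid i)
  let l : ι → K := fun i => a i (p i) / gen O u i (p i)
  let m : ι → K := fun i => b i (q i) / gen O v i (q i)
  refine ⟨fun i => if gen O w i = 0 then 0 else a i - l i • gen O u i,
    fun i => if gen O w i = 0 then 0 else b i - m i • gen O v i,
    fun i => if gen O w i = 0 then c i else c i + (l i + m i) • gen O w i, ⟨?_, ?_, ?_, ?_⟩, ?_, ?_⟩
  · intro i
    by_cases h : gen O w i = 0
    · simp [h]
    · simp only [h, if_false, Pi.sub_apply, Pi.smul_apply, smul_eq_mul, l]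
      rw [div_mul_cancel₀ _ (hu i), sub_self]
  · intro i
    by_cases h : gen O w i = 0
    · simp [h]
    · simp only [h, if_false, Pi.sub_apply, Pi.smul_apply, smul_eq_mul, m]
      rw [div_mul_cancel₀ _ (hv i), sub_self]
  · intro i h
    simp [h]
  · intro i h
    simp [h]
  · funext x y z
    refine Finset.sum_congr rfl fun i _ => ?_
    by_cases h : gen O w i = 0
    · have hz : gen O w i z = 0 := congrFun h z
      beta_reduce
      rw [if_pos h, if_pos h, if_pos h, hz]
      simp
    · beta_reduce
      rw [if_neg h, if_neg h, if_neg h]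
      simp only [Pi.sub_apply, Pi.add_apply, Pi.smul_apply, smul_eq_mul]
      ring
  · intro i
    refine ⟨fun h => by simp [h], fun h => ⟨l i, m i, ?_, ?_, ?_⟩⟩
    · simp [h]
    · simp [h]
    · simp only [h, if_false, neg_smul]
      abel

theorem mem_maximalIdeal_of_mul_mem {s g : K} (hg : g ∉ O) (h : s * g ∈ O) :
    ∃ s' : O, (s' : K) = s ∧ residue O s' = 0 := by
  have h1 : O.valuation s < 1 := by
    rw [← O.valuation_le_one_iff, map_mul] at h
    rw [← O.valuation_le_one_iff, not_le] at hg
    by_contra! hs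
    have : 1 < O.valuation s * O.valuation g := one_lt_mul_of_le_of_lt hs hg
    exact absurd h (not_le.mpr this)
  have hm : s ∈ O := (O.valuation_le_one_iff s).mp h1.le
  refine ⟨⟨s, hm⟩, rfl, ?_⟩
  rw [residue_eq_zero_iff]
  exact (O.valuation_lt_one_iff ⟨s, hm⟩).mpr h1

theorem red_eq_zero_of_normalized (hn : Nondegenerate O u v w p q)
    (hg : Good (red O u) (red O v) (red O w)) {a : ι → α → O} {b : ι → β → O} {c : ι → γ → O}
    (hab : Normalized w p q (gen O a) (gen O b))
    (key : tangentSum (red O u) (red O v) (red O w) (red O a) (red O b) (red O c) = 0) (i : ι) :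
    red O a i = 0 ∧ red O b i = 0 ∧ red O c i = 0 := by
  obtain ⟨hi0, hi1⟩ := hg.indep _ _ _ key i
  by_cases hwi : gen O w i = 0
  · refine ⟨?_, ?_, hi0 ((red_eq_zero_iff hn).mpr hwi)⟩
    · funext x
      have : a i = 0 := gen_eq_zero_iff.mp (hab.left_zero i hwi)
      simp [red, this]
    · funext x
      have : b i = 0 := gen_eq_zero_iff.mp (hab.mid_zero i hwi)
      simp [red, this]
  · obtain ⟨l, m, hl, hm, hc⟩ := hi1 (fun h => hwi ((red_eq_zero_iff hn).mp h))
    have hl0 : l = 0 := by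
      have h3 := congrFun hl (p i)
      have : a i (p i) = 0 := Subtype.ext (hab.left_pivot i)
      simp only [red, this, map_zero, Pi.smul_apply, smul_eq_mul] at h3
      exact (mul_eq_zero.mp h3.symm).resolve_right (hn.left i)
    have hm0 : m = 0 := by
      have h3 := congrFun hm (q i)
      have : b i (q i) = 0 := Subtype.ext (hab.mid_pivot i)
      simp only [red, this, map_zero, Pi.smul_apply, smul_eq_mul] at h3
      exact (mul_eq_zero.mp h3.symm).resolve_right (hn.mid i)
    refine ⟨by rw [hl, hl0, zero_smul], by rw [hm, hm0, zero_smul], ?_⟩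
    rw [hc, hl0, hm0]
    simp

/-- A nonzero normalized system of coefficients cannot be scaled to a primitive integral one whose
associated tangent vector reduces to zero. -/
theorem false_of_primitive (hn : Nondegenerate O u v w p q)
    (hg : Good (red O u) (red O v) (red O w)) {a : ι → α → K} {b : ι → β → K} {c : ι → γ → K}
    (hab : Normalized w p q a b) {s : K} {t : α → β → γ → O} (ht : ∀ x y z, residue O (t x y z) = 0)
    (hst : ∀ x y z, s * tangentSum (gen O u) (gen O v) (gen O w) a b c x y z = t x y z)
    (ha : ∀ j : ι × α, s * a j.1 j.2 ∈ O) (hb : ∀ j : ι × β, s * b j.1 j.2 ∈ O)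
    (hc : ∀ j : ι × γ, s * c j.1 j.2 ∈ O)
    (h1 : (∃ j : ι × α, s * a j.1 j.2 = 1) ∨ (∃ j : ι × β, s * b j.1 j.2 = 1) ∨
      (∃ j : ι × γ, s * c j.1 j.2 = 1)) : False := by
  let a' : ι → α → O := fun i x => ⟨s * a i x, ha (i, x)⟩
  let b' : ι → β → O := fun i x => ⟨s * b i x, hb (i, x)⟩
  let c' : ι → γ → O := fun i x => ⟨s * c i x, hc (i, x)⟩
  have key : tangentSum (red O u) (red O v) (red O w) (red O a') (red O b') (red O c') = 0 := by
    funext x y z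
    rw [tangentSum_red]
    have : tangentSum u v w a' b' c' x y z = t x y z := by
      apply Subtype.ext
      rw [← tangentSum_gen, ← hst]
      exact congrFun (congrFun (congrFun (tangentSum_smul (u := gen O u) (v := gen O v)
        (w := gen O w) s a b c) x) y) z
    rw [this, ht]
    rfl
  have hz := red_eq_zero_of_normalized hn hg (a := a') (b := b') (c := c') (hab.smul s) key
  rcases h1 with ⟨⟨i, x⟩, h⟩ | ⟨⟨i, x⟩, h⟩ | ⟨⟨i, x⟩, h⟩
  · have h3 := congrFun (hz i).1 x
    have : a' i x = 1 := Subtype.ext h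
    simp [red, this] at h3
  · have h3 := congrFun (hz i).2.1 x
    have : b' i x = 1 := Subtype.ext h
    simp [red, this] at h3
  · have h3 := congrFun (hz i).2.2 x
    have : c' i x = 1 := Subtype.ext h
    simp [red, this] at h3

variable [Finite α] [Finite β] [Finite γ]

theorem mem_of_normalized (hn : Nondegenerate O u v w p q)
    (hg : Good (red O u) (red O v) (red O w)) {a : ι → α → K} {b : ι → β → K} {c : ι → γ → K}
    (hab : Normalized w p q a b) {t : α → β → γ → O}
    (ht : tangentSum (gen O u) (gen O v) (gen O w) a b c = fun x y z => (t x y z : K)) :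
    (∀ i x, a i x ∈ O) ∧ (∀ i y, b i y ∈ O) ∧ (∀ i z, c i z ∈ O) := by
  by_contra hcon
  obtain ⟨s, hs0, ha, hb, hc, h1⟩ := exists_primitive_scaling O (fun s : ι × α => a s.1 s.2)
    (fun s : ι × β => b s.1 s.2) (fun s : ι × γ => c s.1 s.2) (by
      rintro ⟨h1, h2, h3⟩
      exact hcon ⟨fun i x => (h1 (i, x)).symm ▸ O.zero_mem,
        fun i x => (h2 (i, x)).symm ▸ O.zero_mem, fun i x => (h3 (i, x)).symm ▸ O.zero_mem⟩)
  obtain ⟨s', hs', hs'0⟩ : ∃ s' : O, (s' : K) = s ∧ residue O s' = 0 := by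
    by_contra hno
    refine hcon ⟨fun i x => ?_, fun i x => ?_, fun i x => ?_⟩
    · by_contra h
      exact hno (mem_maximalIdeal_of_mul_mem h (ha (i, x)))
    · by_contra h
      exact hno (mem_maximalIdeal_of_mul_mem h (hb (i, x)))
    · by_contra h
      exact hno (mem_maximalIdeal_of_mul_mem h (hc (i, x)))
  refine false_of_primitive hn hg hab (s := s) (t := fun x y z => s' * t x y z) ?_ ?_ ha hb hc h1
  · intro x y z
    rw [map_mul, hs'0, zero_mul]
  · intro x y z
    simp [ht, hs']

/-- Integral elements of the sum of the tangent spaces reduce to elements of the reduced sum. -/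
theorem InTangent.red (hn : Nondegenerate O u v w p q)
    (hg : Good (red O u) (red O v) (red O w)) {t : α → β → γ → O}
    (ht : InTangent (gen O u) (gen O v) (gen O w) fun x y z => (t x y z : K)) :
    InTangent (red O u) (red O v) (red O w) fun x y z => residue O (t x y z) := by
  obtain ⟨a, b, c, h⟩ := ht
  obtain ⟨a', b', c', hN, hS, -⟩ := exists_normalized hn a b c
  obtain ⟨h1, h2, h3⟩ := mem_of_normalized hn hg hN (hS.trans h)
  refine ⟨SegreContact.red O fun i x => ⟨a' i x, h1 i x⟩, SegreContact.red O fun i x => ⟨b' i x, h2 i x⟩,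
    SegreContact.red O fun i x => ⟨c' i x, h3 i x⟩, ?_⟩
  funext x y z
  rw [tangentSum_red]
  congr 1
  apply Subtype.ext
  rw [← tangentSum_gen]
  exact congrFun (congrFun (congrFun (hS.trans h) x) y) z

theorem indep_of_red (hn : Nondegenerate O u v w p q)
    (hg : Good (red O u) (red O v) (red O w)) (a : ι → α → K) (b : ι → β → K) (c : ι → γ → K)
    (h : tangentSum (gen O u) (gen O v) (gen O w) a b c = 0) (i : ι) :
    (gen O w i = 0 → c i = 0) ∧ (gen O w i ≠ 0 → ∃ l m : K,
      a i = l • gen O u i ∧ b i = m • gen O v i ∧ c i = (-(l + m)) • gen O w i) := by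
  obtain ⟨a', b', c', hN, hS, hrel⟩ := exists_normalized hn a b c
  rw [h] at hS
  have hall : ¬ ¬ ((∀ s : ι × α, a' s.1 s.2 = 0) ∧ (∀ s : ι × β, b' s.1 s.2 = 0) ∧
      (∀ s : ι × γ, c' s.1 s.2 = 0)) := by
    intro hne
    obtain ⟨s, -, ha, hb, hc, h1⟩ := exists_primitive_scaling O _ _ _ hne
    refine false_of_primitive hn hg hN (s := s) (t := 0) ?_ ?_ ha hb hc h1
    · simp
    · simp [hS]
  obtain ⟨ha, hb, hc⟩ := not_not.mp hall
  have ha' : a' i = 0 := funext fun x => ha (i, x)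
  have hb' : b' i = 0 := funext fun x => hb (i, x)
  have hc' : c' i = 0 := funext fun x => hc (i, x)
  obtain ⟨h0, h1⟩ := hrel i
  refine ⟨fun hi => by rw [← h0 hi, hc'], fun hi => ?_⟩
  simpa [ha', hb', hc'] using h1 hi

end Specialization

section Scaling
variable {ι α β γ : Type*} [Fintype ι] {K : Type*} [CommRing K]
  {u : ι → α → K} {v : ι → β → K} {w : ι → γ → K}

theorem IsContact.smul {x : α → K} {y : β → K} {z : γ → K} (h : IsContact u v w x y z)
    (r s t : K) : IsContact u v w (r • x) (s • y) (t • z) := by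
  refine ⟨fun e => ?_, fun e => ?_, fun e => ?_⟩
  · exact ((h.1 e).smul (s * t)).congr fun _ _ _ => by simp; ring
  · exact ((h.2.1 e).smul (r * t)).congr fun _ _ _ => by simp; ring
  · exact ((h.2.2 e).smul (r * s)).congr fun _ _ _ => by simp; ring

theorem IsContactDir.smul {i : ι} {x : α → K} {y : β → K} {z : γ → K}
    (h : IsContactDir u v w i x y z) (s : K) :
    IsContactDir u v w i (s • x) (s • y) (s • z) := by
  refine ⟨fun e => ?_, fun e => ?_, fun e => ?_⟩
  · exact ((h.1 e).smul s).congr fun _ _ _ => by simp; ring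
  · exact ((h.2.1 e).smul s).congr fun _ _ _ => by simp; ring
  · exact ((h.2.2 e).smul s).congr fun _ _ _ => by simp; ring

theorem IsContactDir.sub_smul {i : ι} {x : α → K} {y : β → K} {z : γ → K}
    (h : IsContactDir u v w i x y z) (l m n : K) :
    IsContactDir u v w i (x - l • u i) (y - m • v i) (z - n • w i) := by
  obtain ⟨h1, h2, h3⟩ := isContact_self (u := u) (v := v) (w := w) i
  refine ⟨fun e => ?_, fun e => ?_, fun e => ?_⟩
  · exact ((h.1 e).sub ((h1 e).smul (m + n))).congr fun _ _ _ => by simp; ring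
  · exact ((h.2.1 e).sub ((h2 e).smul (l + n))).congr fun _ _ _ => by simp; ring
  · exact ((h.2.2 e).sub ((h3 e).smul (l + m))).congr fun _ _ _ => by simp; ring

end Scaling

theorem exists_red_ne_zero {ι α β γ K : Type*} [Field K] {O : ValuationSubring K}
    {u : ι → α → O} {v : ι → β → O} {w : ι → γ → O} {p : ι → α} {q : ι → β}
    (hn : Nondegenerate O u v w p q) {i : ι} (hi : gen O w i ≠ 0) : ∃ o, red O w i o ≠ 0 :=
  Function.ne_iff.mp ((hn.right i).resolve_left fun h => hi (gen_eq_zero_iff.mpr h))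

section Specialization
open IsLocalRing

variable {ι α β γ : Type*} [Fintype ι]
variable {K : Type*} [Field K] {O : ValuationSubring K}
variable {u : ι → α → O} {v : ι → β → O} {w : ι → γ → O} {p : ι → α} {q : ι → β}

theorem exists_residue_eq {σ : Type*} (e : σ → ResidueField O) :
    ∃ e' : σ → O, e = fun x => residue O (e' x) :=
  ⟨fun x => (residue_surjective (e x)).choose,
    funext fun x => (residue_surjective (e x)).choose_spec.symm⟩

theorem residue_eq_zero_of_isContactDir (hn : Nondegenerate O u v w p q)
    (hg : Good (red O u) (red O v) (red O w)) {i : ι} {o : γ} (ho : red O w i o ≠ 0)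
    {x : α → O} {y : β → O} {z : γ → O}
    (hx : x (p i) = 0) (hy : y (q i) = 0) (hz : z o = 0)
    (h : IsContactDir (red O u) (red O v) (red O w) i
      (fun r => residue O (x r)) (fun s => residue O (y s)) (fun t => residue O (z t))) :
    (∀ r, residue O (x r) = 0) ∧ (∀ r, residue O (y r) = 0) ∧ (∀ r, residue O (z r) = 0) := by
  obtain ⟨l, m, n, h1, h2, h3⟩ := hg.reduced i (fun h => ho (congrFun h o)) _ _ _ h
  have hl : l = 0 := by
    have := congrFun h1 (p i)
    simp only [hx, map_zero, Pi.smul_apply, smul_eq_mul] at this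
    exact (mul_eq_zero.mp this.symm).resolve_right (hn.left i)
  have hm : m = 0 := by
    have := congrFun h2 (q i)
    simp only [hy, map_zero, Pi.smul_apply, smul_eq_mul] at this
    exact (mul_eq_zero.mp this.symm).resolve_right (hn.mid i)
  have hn' : n = 0 := by
    have := congrFun h3 o
    simp only [hz, map_zero, Pi.smul_apply, smul_eq_mul] at this
    exact (mul_eq_zero.mp this.symm).resolve_right ho
  refine ⟨fun r => ?_, fun r => ?_, fun r => ?_⟩
  · simpa [hl] using congrFun h1 r
  · simpa [hm] using congrFun h2 r
  · simpa [hn'] using congrFun h3 r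

variable [Finite α] [Finite β] [Finite γ]

theorem IsContact.red (hn : Nondegenerate O u v w p q) (hg : Good (red O u) (red O v) (red O w))
    {x : α → O} {y : β → O} {z : γ → O}
    (h : IsContact (gen O u) (gen O v) (gen O w) (fun r => (x r : K)) (fun s => (y s : K))
      (fun t => (z t : K))) :
    IsContact (SegreContact.red O u) (SegreContact.red O v) (SegreContact.red O w)
      (fun r => residue O (x r)) (fun s => residue O (y s)) (fun t => residue O (z t)) := by
  refine ⟨fun e => ?_, fun e => ?_, fun e => ?_⟩ <;> obtain ⟨e, rfl⟩ := exists_residue_eq e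
  · exact (InTangent.red hn hg (t := fun r s t => e r * y s * z t)
      ((h.1 fun r => (e r : K)).congr fun _ _ _ => by simp)).congr fun _ _ _ => by simp
  · exact (InTangent.red hn hg (t := fun r s t => x r * e s * z t)
      ((h.2.1 fun r => (e r : K)).congr fun _ _ _ => by simp)).congr fun _ _ _ => by simp
  · exact (InTangent.red hn hg (t := fun r s t => x r * y s * e t)
      ((h.2.2 fun r => (e r : K)).congr fun _ _ _ => by simp)).congr fun _ _ _ => by simp

theorem IsContactDir.red (hn : Nondegenerate O u v w p q)
    (hg : Good (red O u) (red O v) (red O w)) {i : ι}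
    {x : α → O} {y : β → O} {z : γ → O}
    (h : IsContactDir (gen O u) (gen O v) (gen O w) i (fun r => (x r : K)) (fun s => (y s : K))
      (fun t => (z t : K))) :
    IsContactDir (SegreContact.red O u) (SegreContact.red O v) (SegreContact.red O w) i
      (fun r => residue O (x r)) (fun s => residue O (y s)) (fun t => residue O (z t)) := by
  refine ⟨fun e => ?_, fun e => ?_, fun e => ?_⟩ <;> obtain ⟨e, rfl⟩ := exists_residue_eq e
  · exact (InTangent.red hn hg (t := fun r s t => e r * (y s * w i t + v i s * z t))
      ((h.1 fun r => (e r : K)).congr fun _ _ _ => by simp)).congr fun _ _ _ => by simp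
  · exact (InTangent.red hn hg (t := fun r s t => e s * (x r * w i t + u i r * z t))
      ((h.2.1 fun r => (e r : K)).congr fun _ _ _ => by simp)).congr fun _ _ _ => by simp
  · exact (InTangent.red hn hg (t := fun r s t => (x r * v i s + u i r * y s) * e t)
      ((h.2.2 fun r => (e r : K)).congr fun _ _ _ => by simp)).congr fun _ _ _ => by simp

theorem reduced_of_red (hn : Nondegenerate O u v w p q) (hg : Good (red O u) (red O v) (red O w))
    {i : ι} (hi : gen O w i ≠ 0) (x : α → K) (y : β → K) (z : γ → K)
    (h : IsContactDir (gen O u) (gen O v) (gen O w) i x y z) :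
    ∃ l m n : K, x = l • gen O u i ∧ y = m • gen O v i ∧ z = n • gen O w i := by
  obtain ⟨o, ho⟩ := exists_red_ne_zero hn hi
  have hu := coe_ne_zero_of_residue_ne_zero (hn.left i)
  have hv := coe_ne_zero_of_residue_ne_zero (hn.mid i)
  have hw := coe_ne_zero_of_residue_ne_zero ho
  refine ⟨x (p i) / (u i (p i) : K), y (q i) / (v i (q i) : K), z o / (w i o : K), ?_⟩
  have h' := h.sub_smul (x (p i) / (u i (p i) : K)) (y (q i) / (v i (q i) : K)) (z o / (w i o : K))
  rw [← sub_eq_zero, ← sub_eq_zero (a := y), ← sub_eq_zero (a := z)]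
  have hx' : (x - (x (p i) / (u i (p i) : K)) • gen O u i) (p i) = 0 := by
    simp [div_mul_cancel₀ _ hu]
  have hy' : (y - (y (q i) / (v i (q i) : K)) • gen O v i) (q i) = 0 := by
    simp [div_mul_cancel₀ _ hv]
  have hz' : (z - (z o / (w i o : K)) • gen O w i) o = 0 := by
    simp [div_mul_cancel₀ _ hw]
  generalize x - (x (p i) / (u i (p i) : K)) • gen O u i = X at *
  generalize y - (y (q i) / (v i (q i) : K)) • gen O v i = Y at *
  generalize z - (z o / (w i o : K)) • gen O w i = Z at *
  by_contra hne
  obtain ⟨s, -, hX, hY, hZ, h1⟩ := exists_primitive_scaling O X Y Z fun h0 =>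
    hne ⟨funext h0.1, funext h0.2.1, funext h0.2.2⟩
  have h0 := residue_eq_zero_of_isContactDir hn hg ho
    (x := fun r => ⟨s * X r, hX r⟩) (y := fun r => ⟨s * Y r, hY r⟩) (z := fun r => ⟨s * Z r, hZ r⟩)
    (Subtype.ext (by simp [hx'])) (Subtype.ext (by simp [hy'])) (Subtype.ext (by simp [hz']))
    (IsContactDir.red hn hg (h'.smul s))
  have one_res : ∀ (t : K) (ht : t ∈ O), t = 1 → residue O ⟨t, ht⟩ = 0 → False := by
    rintro t ht rfl h
    exact one_ne_zero ((map_one (residue O)).symm.trans h)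
  rcases h1 with ⟨r, h⟩ | ⟨r, h⟩ | ⟨r, h⟩
  · exact one_res _ _ h (h0.1 r)
  · exact one_res _ _ h (h0.2.1 r)
  · exact one_res _ _ h (h0.2.2 r)

theorem eq_of_isContact (hn : Nondegenerate O u v w p q) (hg : Good (red O u) (red O v) (red O w))
    {i : ι} {o : γ} (ho : red O w i o ≠ 0) {x : α → O} {y : β → O} {z : γ → O}
    (hx : ∀ r, residue O (x r) = residue O (u i r)) (hy : ∀ r, residue O (y r) = residue O (v i r))
    (hz : ∀ r, residue O (z r) = residue O (w i r))
    (hxp : x (p i) = u i (p i)) (hyq : y (q i) = v i (q i)) (hzo : z o = w i o)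
    (h : IsContact (gen O u) (gen O v) (gen O w) (fun r => (x r : K)) (fun s => (y s : K))
      (fun t => (z t : K))) : x = u i ∧ y = v i ∧ z = w i := by
  by_contra hne
  obtain ⟨s, hs0, hX, hY, hZ, h1⟩ := exists_primitive_scaling O (fun r => ((x r - u i r : O) : K))
    (fun r => ((y r - v i r : O) : K)) (fun r => ((z r - w i r : O) : K)) fun h0 =>
    hne ⟨funext fun r => sub_eq_zero.mp (Subtype.ext (h0.1 r)),
      funext fun r => sub_eq_zero.mp (Subtype.ext (h0.2.1 r)),
      funext fun r => sub_eq_zero.mp (Subtype.ext (h0.2.2 r))⟩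
  obtain ⟨ε, hε, hε0⟩ : ∃ ε : O, s * ε = 1 ∧ residue O ε = 0 := by
    rcases h1 with ⟨r, h⟩ | ⟨r, h⟩ | ⟨r, h⟩
    · exact ⟨_, h, by rw [map_sub, hx, sub_self]⟩
    · exact ⟨_, h, by rw [map_sub, hy, sub_self]⟩
    · exact ⟨_, h, by rw [map_sub, hz, sub_self]⟩
  obtain ⟨X, hXd⟩ : ∃ X : α → O, ∀ r, (X r : K) = s * ((x r - u i r : O) : K) :=
    ⟨fun r => ⟨_, hX r⟩, fun r => rfl⟩
  obtain ⟨Y, hYd⟩ : ∃ X : β → O, ∀ r, (X r : K) = s * ((y r - v i r : O) : K) :=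
    ⟨fun r => ⟨_, hY r⟩, fun r => rfl⟩
  obtain ⟨Z, hZd⟩ : ∃ X : γ → O, ∀ r, (X r : K) = s * ((z r - w i r : O) : K) :=
    ⟨fun r => ⟨_, hZ r⟩, fun r => rfl⟩
  have hxX : ∀ r, (x r : K) = u i r + ε * X r := fun r => by
    rw [hXd, ← mul_assoc, mul_comm (ε : K), hε]; push_cast; ring
  have hyY : ∀ r, (y r : K) = v i r + ε * Y r := fun r => by
    rw [hYd, ← mul_assoc, mul_comm (ε : K), hε]; push_cast; ring
  have hzZ : ∀ r, (z r : K) = w i r + ε * Z r := fun r => by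
    rw [hZd, ← mul_assoc, mul_comm (ε : K), hε]; push_cast; ring
  obtain ⟨g1, g2, g3⟩ := isContact_self (u := gen O u) (v := gen O v) (w := gen O w) i
  have hdir : IsContactDir (red O u) (red O v) (red O w) i (fun r => residue O (X r))
      (fun s => residue O (Y s)) (fun t => residue O (Z t)) := by
    refine ⟨fun e => ?_, fun e => ?_, fun e => ?_⟩ <;> obtain ⟨e, rfl⟩ := exists_residue_eq e
    · refine (InTangent.red hn hg
        (t := fun r s t => e r * (Y s * w i t + v i s * Z t + ε * (Y s * Z t))) ?_).congr
        fun _ _ _ => by simp [hε0]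
      refine (((h.1 fun r => (e r : K)).sub (g1 fun r => (e r : K))).smul s).congr fun r j t => ?_
      simp only [hyY, hzZ]
      push_cast
      linear_combination (e r * (Y j * w i t + v i j * Z t + ε * (Y j * Z t)) : K) * hε
    · refine (InTangent.red hn hg
        (t := fun r s t => e s * (X r * w i t + u i r * Z t + ε * (X r * Z t))) ?_).congr
        fun _ _ _ => by simp [hε0]
      refine (((h.2.1 fun r => (e r : K)).sub (g2 fun r => (e r : K))).smul s).congr fun r j t => ?_
      simp only [hxX, hzZ]
      push_cast
      linear_combination (e j * (X r * w i t + u i r * Z t + ε * (X r * Z t)) : K) * hε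
    · refine (InTangent.red hn hg
        (t := fun r s t => (X r * v i s + u i r * Y s + ε * (X r * Y s)) * e t) ?_).congr
        fun _ _ _ => by simp [hε0]
      refine (((h.2.2 fun r => (e r : K)).sub (g3 fun r => (e r : K))).smul s).congr fun r j t => ?_
      simp only [hxX, hyY]
      push_cast
      linear_combination ((X r * v i j + u i r * Y j + ε * (X r * Y j)) * e t : K) * hε
  have h0 := residue_eq_zero_of_isContactDir hn hg ho (Subtype.ext (by simp [hXd, hxp]))
    (Subtype.ext (by simp [hYd, hyq])) (Subtype.ext (by simp [hZd, hzo])) hdir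
  have one_res : ∀ t : O, (t : K) = 1 → residue O t = 0 → False := by
    intro t ht h
    have : t = 1 := Subtype.ext ht
    rw [this, map_one] at h
    exact one_ne_zero h
  rcases h1 with ⟨r, h⟩ | ⟨r, h⟩ | ⟨r, h⟩
  · exact one_res _ ((hXd r).trans h) (h0.1 r)
  · exact one_res _ ((hYd r).trans h) (h0.2.1 r)
  · exact one_res _ ((hZd r).trans h) (h0.2.2 r)

theorem exists_primitive_vector (O : ValuationSubring K) {σ : Type*} [Finite σ] {x : σ → K}
    (hx : x ≠ 0) :
    ∃ (c : K) (X : σ → O), c ≠ 0 ∧ (∀ s, (X s : K) = c * x s) ∧ (fun s => residue O (X s)) ≠ 0 := by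
  obtain ⟨c, hc, h1, -, -, h⟩ := exists_primitive_scaling O x x x fun h => hx (funext h.1)
  simp only [or_self] at h
  obtain ⟨s, hs⟩ := h
  refine ⟨c, fun s => ⟨_, h1 s⟩, hc, fun s => rfl, fun h0 => ?_⟩
  have h2 := congrFun h0 s
  have : (⟨c * x s, h1 s⟩ : O) = 1 := Subtype.ext hs
  simp [this] at h2

/-- Rescale an integral vector which is proportional to `y` modulo the maximal ideal so that it
agrees with `y` modulo the maximal ideal, and exactly at a chosen pivot. -/
theorem exists_adjust {σ : Type*} {x y : σ → O} {l : ResidueField O} {o : σ}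
    (hx : (fun s => residue O (x s)) ≠ 0)
    (h : (fun s => residue O (x s)) = l • fun s => residue O (y s)) (ho : residue O (y o) ≠ 0) :
    ∃ c : O, c ≠ 0 ∧ (∀ s, residue O (c * x s) = residue O (y s)) ∧ c * x o = y o := by
  have hl : l ≠ 0 := by
    rintro rfl
    exact hx (by rw [h, zero_smul])
  have hxo : residue O (x o) ≠ 0 := by
    rw [show residue O (x o) = l * residue O (y o) from congrFun h o]
    exact mul_ne_zero hl ho
  obtain ⟨c', hc'⟩ := (residue_ne_zero_iff_isUnit _).mp hxo
  have hpiv : y o * ↑c'⁻¹ * x o = y o := by rw [← hc', mul_assoc, Units.inv_mul, mul_one]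
  refine ⟨y o * ↑c'⁻¹, fun h0 => ho ?_, fun s => ?_, hpiv⟩
  · rw [← hpiv, h0, zero_mul, map_zero]
  · have e1 : residue O (x o) = l * residue O (y o) := congrFun h o
    have e2 : residue O (x s) = l * residue O (y s) := congrFun h s
    have e3 := congrArg (residue O) hpiv
    rw [map_mul, e1] at e3
    have e4 : residue O (y o * ↑c'⁻¹) * l = 1 := by
      apply mul_right_cancel₀ ho
      linear_combination e3
    rw [map_mul, e2]
    linear_combination residue O (y s) * e4

theorem contact_of_red (hn : Nondegenerate O u v w p q) (hg : Good (red O u) (red O v) (red O w))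
    (x : α → K) (y : β → K) (z : γ → K) (hx : x ≠ 0) (hy : y ≠ 0) (hz : z ≠ 0)
    (h : IsContact (gen O u) (gen O v) (gen O w) x y z) :
    ∃ i, gen O w i ≠ 0 ∧
      ∃ l m n : K, x = l • gen O u i ∧ y = m • gen O v i ∧ z = n • gen O w i := by
  obtain ⟨c₁, X, hc₁, hX, hX0⟩ := exists_primitive_vector O hx
  obtain ⟨c₂, Y, hc₂, hY, hY0⟩ := exists_primitive_vector O hy
  obtain ⟨c₃, Z, hc₃, hZ, hZ0⟩ := exists_primitive_vector O hz
  have hC : IsContact (gen O u) (gen O v) (gen O w) (fun r => (X r : K)) (fun r => (Y r : K))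
      (fun r => (Z r : K)) := by
    simp only [hX, hY, hZ]
    exact h.smul c₁ c₂ c₃
  obtain ⟨i, hi, l, m, n, h1, h2, h3⟩ := hg.contact _ _ _ hX0 hY0 hZ0 (IsContact.red hn hg hC)
  obtain ⟨o, ho⟩ := Function.ne_iff.mp hi
  obtain ⟨d₁, hd₁, hX1, hX2⟩ := exists_adjust hX0 h1 (hn.left i)
  obtain ⟨d₂, hd₂, hY1, hY2⟩ := exists_adjust hY0 h2 (hn.mid i)
  obtain ⟨d₃, hd₃, hZ1, hZ2⟩ := exists_adjust hZ0 h3 ho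
  obtain ⟨e1, e2, e3⟩ := eq_of_isContact hn hg ho hX1 hY1 hZ1 hX2 hY2 hZ2 (by
    simp only [MulMemClass.coe_mul]
    exact hC.smul (d₁ : K) (d₂ : K) (d₃ : K))
  have ne : ∀ {d : O} {c : K}, d ≠ 0 → c ≠ 0 → (d : K) * c ≠ 0 := fun hd hc =>
    mul_ne_zero (fun h => hd (Subtype.ext h)) hc
  refine ⟨i, fun h => hi ((red_eq_zero_iff hn).mpr h), (d₁ * c₁ : K)⁻¹, (d₂ * c₂ : K)⁻¹,
    (d₃ * c₃ : K)⁻¹, ?_, ?_, ?_⟩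
  · funext r
    rw [Pi.smul_apply, smul_eq_mul, eq_inv_mul_iff_mul_eq₀ (ne hd₁ hc₁), mul_assoc, ← hX]
    exact congrArg (Subtype.val) (congrFun e1 r)
  · funext r
    rw [Pi.smul_apply, smul_eq_mul, eq_inv_mul_iff_mul_eq₀ (ne hd₂ hc₂), mul_assoc, ← hY]
    exact congrArg (Subtype.val) (congrFun e2 r)
  · funext r
    rw [Pi.smul_apply, smul_eq_mul, eq_inv_mul_iff_mul_eq₀ (ne hd₃ hc₃), mul_assoc, ← hZ]
    exact congrArg (Subtype.val) (congrFun e3 r)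

/-- `Good` lifts from the residue field of a valuation ring to its fraction field. -/
theorem Good.of_red (hn : Nondegenerate O u v w p q) (hg : Good (red O u) (red O v) (red O w)) :
    Good (gen O u) (gen O v) (gen O w) where
  indep a b c h i := indep_of_red hn hg a b c h i
  contact := contact_of_red hn hg
  reduced _ hi := reduced_of_red hn hg hi

end Specialization

section Specialization
open IsLocalRing
universe r
variable {R : Type*} [CommRing R] {K : Type r} [Field K]

/-- Any specialization `𝔮 ⊇ ker φ` is realized by a valuation ring of the target field. -/
theorem exists_valuationSubring_specialization (φ : R →+* K) (𝔮 : Ideal R) [𝔮.IsPrime]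
    (h : RingHom.ker φ ≤ 𝔮) :
    ∃ (O : ValuationSubring K) (χ : R →+* O), (∀ x, (χ x : K) = φ x) ∧
      ∀ x, residue O (χ x) = 0 ↔ x ∈ 𝔮 := by
  have hunit : ∀ y : 𝔮.primeCompl, IsUnit (φ y) := fun y =>
    isUnit_iff_ne_zero.mpr fun h0 => y.2 (h h0)
  let f : Localization.AtPrime 𝔮 →+* K := IsLocalization.lift (M := 𝔮.primeCompl) hunit
  have hf : ∀ x, f (algebraMap R _ x) = φ x := fun x => IsLocalization.lift_eq hunit x
  obtain ⟨O, hO, hloc⟩ := IsLocalRing.exists_factor_valuationRing f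
  let g : Localization.AtPrime 𝔮 →+* O := f.codRestrict O.toSubring hO
  have hg : IsLocalHom g := hloc
  refine ⟨O, g.comp (algebraMap R _), fun x => hf x, fun x => ?_⟩
  rw [residue_eq_zero_iff, mem_maximalIdeal, RingHom.comp_apply, mem_nonunits_iff,
    isUnit_map_iff, IsLocalization.AtPrime.isUnit_to_map_iff (Localization.AtPrime 𝔮) 𝔮]
  simp [Ideal.primeCompl]

theorem Good.of_specialization {S : Type*} [CommRing S] [IsDomain S] {ι α β γ : Type*} [Fintype ι]
    [Finite α] [Finite β] [Finite γ] (φ : R →+* K) (ψ : R →+* S) (hker : ∀ x, φ x = 0 → ψ x = 0)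
    {u : ι → α → R} {v : ι → β → R} {w : ι → γ → R} (p : ι → α) (q : ι → β)
    (hu : ∀ i, ψ (u i (p i)) ≠ 0) (hv : ∀ i, ψ (v i (q i)) ≠ 0)
    (hw : ∀ i, (∀ z, φ (w i z) = 0) ∨ ∃ z, ψ (w i z) ≠ 0)
    (hgood : ∀ (κ : Type r) [Field κ] (χ : R →+* κ), (∀ x, χ x = 0 ↔ ψ x = 0) →
      Good (fun i x => χ (u i x)) (fun i y => χ (v i y)) (fun i z => χ (w i z))) :
    Good (fun i x => φ (u i x)) (fun i y => φ (v i y)) (fun i z => φ (w i z)) := by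
  have : (RingHom.ker ψ).IsPrime := RingHom.ker_isPrime ψ
  obtain ⟨O, χ, h1, h2⟩ := exists_valuationSubring_specialization φ (RingHom.ker ψ)
    fun x hx => hker x hx
  have hχ : ∀ x, ((residue O).comp χ) x = 0 ↔ ψ x = 0 := fun x => h2 x
  have hn : Nondegenerate O (fun i x => χ (u i x)) (fun i y => χ (v i y)) (fun i z => χ (w i z))
      p q := by
    refine ⟨fun i h => hu i ((hχ _).mp h), fun i h => hv i ((hχ _).mp h), fun i => ?_⟩
    refine (hw i).imp (fun h => funext fun z => Subtype.ext ?_) fun ⟨z, hz⟩ h => ?_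
    · exact (h1 _).trans (h z)
    · exact hz ((hχ _).mp (congrFun h z))
  have hφ : ∀ x, φ x = (χ x : K) := fun x => (h1 x).symm
  simp only [hφ]
  exact Good.of_red hn (hgood _ _ hχ)

end Specialization

section Split
variable {ι α β γ J : Type*} [Fintype ι] {K : Type*}

/-- The restriction of a family of vectors to the coordinates in the `j`-th block. -/
abbrev block (π : γ → J) (w : ι → γ → K) (j : J) : ι → {z // π z = j} → K := fun i z => w i z

variable [Field K] {u : ι → α → K} {v : ι → β → K} {w : ι → γ → K} {π : γ → J} {g : ι → J}

theorem InTangent.block {t : α → β → γ → K} (h : InTangent u v w t) (j : J) :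
    InTangent u v (block π w j) fun x y z => t x y z := by
  obtain ⟨a, b, c, rfl⟩ := h
  exact ⟨a, b, SegreContact.block π c j, rfl⟩

theorem IsContact.block {x : α → K} {y : β → K} {z : γ → K} (h : IsContact u v w x y z) (j : J) :
    IsContact u v (block π w j) x y fun s => z s := by
  classical
  refine ⟨fun e => (h.1 e).block j, fun e => (h.2.1 e).block j, fun e => ?_⟩
  refine ((h.2.2 fun s => if hs : π s = j then e ⟨s, hs⟩ else 0).block j).congr fun r s q => ?_
  simp [q.2]

theorem IsContactDir.block {i : ι} {x : α → K} {y : β → K} {z : γ → K}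
    (h : IsContactDir u v w i x y z) (j : J) :
    IsContactDir u v (block π w j) i x y fun s => z s := by
  classical
  refine ⟨fun e => (h.1 e).block j, fun e => (h.2.1 e).block j, fun e => ?_⟩
  refine ((h.2.2 fun s => if hs : π s = j then e ⟨s, hs⟩ else 0).block j).congr fun r s q => ?_
  simp [q.2]

/-- The point of the block `j` is not proportional, in the first two factors, to a fibre. -/
theorem Good.not_proportional (hg : Good u v w) {i i' : ι} (hi : w i ≠ 0) (hi' : w i' = 0)
    {s t : K} (hu : u i' = s • u i) (hv : v i' = t • v i) : False := by
  classical
  have hne : i ≠ i' := by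
    rintro rfl
    exact hi hi'
  have h0 : tangentSum u v w 0 0 (Pi.single i' (w i) - Pi.single i ((s * t) • w i)) = 0 := by
    funext x y z
    simp only [tangentSum, Pi.zero_apply, zero_mul, mul_zero, zero_add, Pi.sub_apply, mul_sub,
      Finset.sum_sub_distrib]
    rw [Finset.sum_eq_single i' (fun j _ hj => by simp [Pi.single_eq_of_ne hj]) (by simp),
      Finset.sum_eq_single i (fun j _ hj => by simp [Pi.single_eq_of_ne hj]) (by simp)]
    simp [hu, hv]
    ring
  have h1 := (hg.indep _ _ _ h0 i').1 hi'
  rw [Pi.sub_apply, Pi.single_eq_same, Pi.single_eq_of_ne hne.symm, sub_zero] at h1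
  exact hi h1

theorem Good.not_proportional_of_common (hg : Good u v w) {i i' : ι} (hi : w i ≠ 0)
    (hi' : w i' = 0) {x : α → K} {y : β → K} (hx : x ≠ 0) (hy : y ≠ 0) {l m l' m' : K}
    (h1 : x = l • u i) (h2 : y = m • v i) (h1' : x = l' • u i') (h2' : y = m' • v i') : False := by
  have hl : l' ≠ 0 := by
    rintro rfl
    exact hx (by simpa using h1')
  have hm : m' ≠ 0 := by
    rintro rfl
    exact hy (by simpa using h2')
  refine hg.not_proportional hi hi' (s := l'⁻¹ * l) (t := m'⁻¹ * m) ?_ ?_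
  · rw [mul_smul, ← h1, h1', inv_smul_smul₀ hl]
  · rw [mul_smul, ← h2, h2', inv_smul_smul₀ hm]

/-- `Good` can be checked block by block when every `wᵢ` is supported on one block. -/
theorem Good.of_block (hu : ∀ i, u i ≠ 0) (hv : ∀ i, v i ≠ 0) (hw : ∀ i, w i ≠ 0)
    (hsupp : ∀ i z, w i z ≠ 0 → π z = g i) (hg : ∀ j, Good u v (block π w j)) : Good u v w := by
  have hoff : ∀ {i j}, j ≠ g i → block π w j i = 0 := fun {i j} hj => by
    funext z
    by_contra h
    exact hj (z.2.symm.trans (hsupp i z h))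
  have hon : ∀ i, block π w (g i) i ≠ 0 := fun i h => by
    obtain ⟨z, hz⟩ := Function.ne_iff.mp (hw i)
    exact hz (congrFun h ⟨z, hsupp i z hz⟩)
  have hact : ∀ {i j}, block π w j i ≠ 0 → j = g i := fun h => by
    by_contra h'
    exact h (hoff h')
  refine ⟨fun a b c h i => ⟨fun h0 => (hw i h0).elim, fun _ => ?_⟩, ?_, ?_⟩
  · have hj : ∀ j, tangentSum u v (block π w j) a b (block π c j) = 0 := fun j => by
      funext x y z
      exact congrFun (congrFun (congrFun h x) y) z
    obtain ⟨l, m, h1, h2, h3⟩ := ((hg (g i)).indep _ _ _ (hj _) i).2 (hon i)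
    refine ⟨l, m, h1, h2, funext fun z => ?_⟩
    by_cases hz : π z = g i
    · exact congrFun h3 ⟨z, hz⟩
    · have e1 := congrFun (((hg (π z)).indep _ _ _ (hj _) i).1 (hoff hz)) ⟨z, rfl⟩
      have e2 : w i z = 0 := congrFun (hoff hz) ⟨z, rfl⟩
      rw [Pi.smul_apply, e2, smul_zero]
      exact e1
  · intro x y z hx hy hz h
    have key : ∀ j, (fun s : {s // π s = j} => z s) ≠ 0 → ∃ i, j = g i ∧ ∃ l m n : K,
        x = l • u i ∧ y = m • v i ∧ (fun s : {s // π s = j} => z s) = n • block π w j i := by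
      intro j hj
      obtain ⟨i, hi, h'⟩ := (hg j).contact _ _ _ hx hy hj (h.block j)
      exact ⟨i, hact hi, h'⟩
    obtain ⟨o, ho⟩ := Function.ne_iff.mp hz
    obtain ⟨i, hi, l, m, n, h1, h2, h3⟩ := key (π o) fun h => ho (congrFun h ⟨o, rfl⟩)
    refine ⟨i, hw i, l, m, n, h1, h2, funext fun s => ?_⟩
    by_cases hs : π s = π o
    · exact congrFun h3 ⟨s, hs⟩
    · rw [Pi.smul_apply, show w i s = 0 from congrFun (hoff (hi ▸ hs)) ⟨s, rfl⟩, smul_zero]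
      by_contra hzs
      obtain ⟨i', hi', l', m', n', h1', h2', -⟩ := key (π s) fun h => hzs (congrFun h ⟨s, rfl⟩)
      refine (hg (g i)).not_proportional_of_common (hon i) (hoff (i := i') ?_) hx hy h1 h2 h1' h2'
      rw [← hi, ← hi']
      exact Ne.symm hs
  · intro i _ x y z h
    obtain ⟨l, m, n, h1, h2, h3⟩ := (hg (g i)).reduced i (hon i) _ _ _ (h.block _)
    refine ⟨l, m, n, h1, h2, funext fun s => ?_⟩
    by_cases hs : π s = g i
    · exact congrFun h3 ⟨s, hs⟩
    · have hwi := hoff (i := i) hs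
      rw [Pi.smul_apply, show w i s = 0 from congrFun hwi ⟨s, rfl⟩, smul_zero]
      by_contra hzs
      obtain ⟨g1, g2, -⟩ := h.block (π := π) (π s)
      have hc : IsContact u v (block π w (π s)) (u i) (v i) fun q => z q := by
        refine ⟨fun e => (g1 e).congr fun r t q => ?_, fun e => (g2 e).congr fun r t q => ?_,
          (isContact_self i).2.2⟩
        · rw [congrFun hwi q]
          simp
          ring
        · rw [congrFun hwi q]
          simp
          ring
      obtain ⟨i', hi', l', m', n', h1', h2', -⟩ := (hg (π s)).contact _ _ _ (hu i) (hv i)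
        (fun h => hzs (congrFun h ⟨s, rfl⟩)) hc
      exact (hg (π s)).not_proportional_of_common hi' hwi (hu i) (hv i) h1' h2'
        (one_smul K (u i)).symm (one_smul K (v i)).symm

end Split

section SpecialBlock

/-- The combinatorial pattern of a special configuration on an `A × B` grid: the active indices
enumerate the diagonal cells `(r, r)` with `r < n`, and each inactive index has one of the cells
off the diagonal staircase, or a pair of adjacent cells meeting the active rows or columns. -/
structure IsPattern {ι : Type*} (A B n : ℕ) (act : ι → Prop) (p q : ι → ℕ) : Prop where
  lt : n < A
  le : A ≤ B
  act_lt : ∀ i, act i → p i < n ∧ q i = p i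
  act_inj : ∀ i j, act i → act j → p i = p j → i = j
  act_surj : ∀ r < n, ∃ i, act i ∧ p i = r
  cell : ∀ i, ¬ act i →
    (n ≤ p i ∧ p i < A ∧ n ≤ q i ∧ q i < B ∧ p i ≠ min (q i) (A - 1)) ∨
    (p i % 2 = 0 ∧ p i + 1 < n ∧ n ≤ q i ∧ q i + 1 < B) ∨
    (q i % 2 = 0 ∧ q i + 1 < n ∧ n ≤ p i ∧ p i + 1 < A)
  cell_inj : ∀ i j, ¬ act i → ¬ act j → p i = p j → q i = q j → i = j

/-- The coordinates where the `i`-th special vector equals `1`. -/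
def Hit {ι : Type*} (n : ℕ) (act : ι → Prop) (p : ι → ℕ) (i : ι) (x : ℕ) : Prop :=
  x = p i ∨ (¬ act i ∧ p i < n ∧ x = p i + 1)

theorem hit_iff_of_act {ι : Type*} {n : ℕ} {act : ι → Prop} {p : ι → ℕ} {i : ι} (hi : act i)
    {x : ℕ} : Hit n act p i x ↔ x = p i := by
  simp [Hit, hi]

/-- A configuration of vectors following a pattern. -/
structure IsSpecial {ι γ K : Type*} [Field K] {A B : ℕ} (n : ℕ) (act : ι → Prop) (p q : ι → ℕ)
    (u : ι → Fin A → K) (v : ι → Fin B → K) (w : ι → γ → K) : Prop where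
  pattern : IsPattern A B n act p q
  left_one : ∀ i (x : Fin A), Hit n act p i x → u i x = 1
  left_zero : ∀ i (x : Fin A), ¬ Hit n act p i x → u i x = 0
  mid_one : ∀ i (x : Fin B), Hit n act q i x → v i x = 1
  mid_zero : ∀ i (x : Fin B), ¬ Hit n act q i x → v i x = 0
  right_zero : ∀ i, ¬ act i → w i = 0
  right_ne_zero : ∀ i, act i → w i ≠ 0
  right_indep : ∀ i j, act i → act j → i ≠ j → ∀ s t : K, s • w i = t • w j → s = 0 ∧ t = 0

variable {ι γ K : Type*} [Field K] {A B n : ℕ} {act : ι → Prop} {p q : ι → ℕ}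
  {u : ι → Fin A → K} {v : ι → Fin B → K} {w : ι → γ → K}

theorem IsPattern.eq_of_hit (h : IsPattern A B n act p q) {i j : ι} (hi : ¬ act i) (hj : ¬ act j)
    {x y : ℕ} (hix : Hit n act p i x) (hiy : Hit n act q i y) (hjx : Hit n act p j x)
    (hjy : Hit n act q j y) : i = j := by
  have h1 := h.cell i hi
  have h2 := h.cell j hj
  simp only [Hit, hi, hj, not_false_eq_true, true_and] at hix hiy hjx hjy
  apply h.cell_inj i j hi hj <;> omega

/-- The `i`-th summand of `tangentSum`. -/
abbrev term (u : ι → Fin A → K) (v : ι → Fin B → K) (w : ι → γ → K) (a : ι → Fin A → K)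
    (b : ι → Fin B → K) (c : ι → γ → K) (x : Fin A) (y : Fin B) (z : γ) (i : ι) : K :=
  a i x * v i y * w i z + u i x * b i y * w i z + u i x * v i y * c i z

namespace IsSpecial

variable {a : ι → Fin A → K} {b : ι → Fin B → K} {c : ι → γ → K}

theorem left_act (h : IsSpecial n act p q u v w)
    {i : ι} (hi : act i) (x : Fin A) : u i x = if (x : ℕ) = p i then 1 else 0 := by
  split_ifs with hx
  · exact h.left_one i x (.inl hx)
  · exact h.left_zero i x (by rwa [hit_iff_of_act hi])

theorem mid_act (h : IsSpecial n act p q u v w)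
    {i : ι} (hi : act i) (y : Fin B) : v i y = if (y : ℕ) = p i then 1 else 0 := by
  have hq := (h.pattern.act_lt i hi).2
  split_ifs with hx
  · exact h.mid_one i y (.inl (by omega))
  · exact h.mid_zero i y (by rw [hit_iff_of_act hi]; omega)

theorem term_act_eq_zero (h : IsSpecial n act p q u v w)
    {i : ι} (hi : act i) {x : Fin A} {y : Fin B} (z : γ) (hx : (x : ℕ) ≠ p i)
    (hy : (y : ℕ) ≠ p i) : term u v w a b c x y z i = 0 := by
  simp [term, h.left_act hi, h.mid_act hi, hx, hy]

theorem term_act_left (h : IsSpecial n act p q u v w)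
    {i : ι} (hi : act i) {x : Fin A} {y : Fin B} (z : γ) (hx : (x : ℕ) = p i)
    (hy : (y : ℕ) ≠ p i) : term u v w a b c x y z i = b i y * w i z := by
  simp [term, h.left_act hi, h.mid_act hi, hx, hy]

theorem term_act_mid (h : IsSpecial n act p q u v w)
    {i : ι} (hi : act i) {x : Fin A} {y : Fin B} (z : γ) (hx : (x : ℕ) ≠ p i)
    (hy : (y : ℕ) = p i) : term u v w a b c x y z i = a i x * w i z := by
  simp [term, h.left_act hi, h.mid_act hi, hx, hy]

theorem term_act_diag (h : IsSpecial n act p q u v w)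
    {i : ι} (hi : act i) {x : Fin A} {y : Fin B} (z : γ) (hx : (x : ℕ) = p i)
    (hy : (y : ℕ) = p i) :
    term u v w a b c x y z i = a i x * w i z + b i y * w i z + c i z := by
  simp [term, h.left_act hi, h.mid_act hi, hx, hy]

theorem term_inact_eq_zero (h : IsSpecial n act p q u v w)
    {i : ι} (hi : ¬ act i) {x : Fin A} {y : Fin B} (z : γ)
    (hxy : ¬ (Hit n act p i x ∧ Hit n act q i y)) : term u v w a b c x y z i = 0 := by
  have hw : w i z = 0 := congrFun (h.right_zero i hi) z
  rcases not_and_or.mp hxy with hx | hy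
  · simp [term, hw, h.left_zero i x hx]
  · simp [term, hw, h.mid_zero i y hy]

theorem term_inact (h : IsSpecial n act p q u v w)
    {i : ι} (hi : ¬ act i) {x : Fin A} {y : Fin B} (z : γ)
    (hx : Hit n act p i x) (hy : Hit n act q i y) : term u v w a b c x y z i = c i z := by
  have hw : w i z = 0 := congrFun (h.right_zero i hi) z
  simp [term, hw, h.left_one i x hx, h.mid_one i y hy]

theorem act_of_right_ne_zero (h : IsSpecial n act p q u v w)
    {i : ι} (hi : w i ≠ 0) : act i := by
  by_contra hn
  exact hi (h.right_zero i hn)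

variable [Fintype ι]

/-- Off the active rows and columns, and off the cells, all tangent vectors vanish. -/
theorem apply_stair (h : IsSpecial n act p q u v w)
    {t : Fin A → Fin B → γ → K} (ht : InTangent u v w t) {x : Fin A} {y : Fin B}
    (hx : n ≤ x) (hy : n ≤ y) (hxy : (x : ℕ) = min (y : ℕ) (A - 1)) (z : γ) : t x y z = 0 := by
  obtain ⟨a, b, c, rfl⟩ := ht
  refine Finset.sum_eq_zero fun i _ => ?_
  by_cases hi : act i
  · have := (h.pattern.act_lt i hi).1
    exact h.term_act_eq_zero hi z (by omega) (by omega)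
  · have h1 := h.pattern.cell i hi
    refine h.term_inact_eq_zero hi z ?_
    simp only [Hit, hi, not_false_eq_true, true_and]
    omega

theorem apply_last_mid (h : IsSpecial n act p q u v w)
    {t : Fin A → Fin B → γ → K} (ht : InTangent u v w t) {i : ι} (hi : act i)
    {x : Fin A} {y : Fin B} (hx : (x : ℕ) = p i) (hy : (y : ℕ) + 1 = B) :
    ∃ s : K, t x y = s • w i := by
  obtain ⟨a, b, c, rfl⟩ := ht
  have hlt := h.pattern.lt
  have hle := h.pattern.le
  have hpi := (h.pattern.act_lt i hi).1
  refine ⟨b i y, funext fun z => ?_⟩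
  refine (Fintype.sum_eq_single i fun j hj => ?_).trans
    (h.term_act_left hi z hx (by omega))
  by_cases hja : act j
  · have h1 : p j ≠ p i := fun e => hj (h.pattern.act_inj j i hja hi e)
    have := (h.pattern.act_lt j hja).1
    exact h.term_act_eq_zero hja z (by omega) (by omega)
  · have h1 := h.pattern.cell j hja
    refine h.term_inact_eq_zero hja z ?_
    simp only [Hit, hja, not_false_eq_true, true_and]
    omega

theorem apply_last_left (h : IsSpecial n act p q u v w)
    {t : Fin A → Fin B → γ → K} (ht : InTangent u v w t) {i : ι} (hi : act i)
    {x : Fin A} {y : Fin B} (hx : (x : ℕ) + 1 = A) (hy : (y : ℕ) = p i) :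
    ∃ s : K, t x y = s • w i := by
  obtain ⟨a, b, c, rfl⟩ := ht
  have hlt := h.pattern.lt
  have hle := h.pattern.le
  have hpi := (h.pattern.act_lt i hi).1
  refine ⟨a i x, funext fun z => ?_⟩
  refine (Fintype.sum_eq_single i fun j hj => ?_).trans
    (h.term_act_mid hi z (by omega) hy)
  by_cases hja : act j
  · have h1 : p j ≠ p i := fun e => hj (h.pattern.act_inj j i hja hi e)
    have := (h.pattern.act_lt j hja).1
    exact h.term_act_eq_zero hja z (by omega) (by omega)
  · have h1 := h.pattern.cell j hja
    refine h.term_inact_eq_zero hja z ?_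
    simp only [Hit, hja, not_false_eq_true, true_and]
    omega

/-- In an active row, a cell of an inactive index carries two summands. -/
theorem row_eq (h : IsSpecial n act p q u v w)
    (h0 : tangentSum u v w a b c = 0) {i j : ι} (hi : ¬ act i) (hj : act j)
    {x : Fin A} {y : Fin B} (hx : (x : ℕ) = p j) (hy : n ≤ y) (hix : Hit n act p i x)
    (hiy : Hit n act q i y) : b j y • w j + c i = 0 := by
  funext z
  have hpj := (h.pattern.act_lt j hj).1
  have h1 := (Fintype.sum_eq_add (f := term u v w a b c x y z) j i (fun e => hi (e ▸ hj))
    fun l hl => ?_).symm.trans (congrFun (congrFun (congrFun h0 x) y) z)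
  · rwa [h.term_act_left hj z hx (by omega), h.term_inact hi z hix hiy] at h1
  · by_cases hla : act l
    · have h1 : p l ≠ p j := fun e => hl.1 (h.pattern.act_inj l j hla hj e)
      have := (h.pattern.act_lt l hla).1
      exact h.term_act_eq_zero hla z (by omega) (by omega)
    · exact h.term_inact_eq_zero hla z fun hh =>
        hl.2 (h.pattern.eq_of_hit hla hi hh.1 hh.2 hix hiy)

theorem col_eq (h : IsSpecial n act p q u v w)
    (h0 : tangentSum u v w a b c = 0) {i j : ι} (hi : ¬ act i) (hj : act j)
    {x : Fin A} {y : Fin B} (hy : (y : ℕ) = p j) (hx : n ≤ x) (hix : Hit n act p i x)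
    (hiy : Hit n act q i y) : a j x • w j + c i = 0 := by
  funext z
  have hpj := (h.pattern.act_lt j hj).1
  have h1 := (Fintype.sum_eq_add (f := term u v w a b c x y z) j i (fun e => hi (e ▸ hj))
    fun l hl => ?_).symm.trans (congrFun (congrFun (congrFun h0 x) y) z)
  · rwa [h.term_act_mid hj z (by omega) hy, h.term_inact hi z hix hiy] at h1
  · by_cases hla : act l
    · have h1 : p l ≠ p j := fun e => hl.1 (h.pattern.act_inj l j hla hj e)
      have := (h.pattern.act_lt l hla).1
      exact h.term_act_eq_zero hla z (by omega) (by omega)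
    · exact h.term_inact_eq_zero hla z fun hh =>
        hl.2 (h.pattern.eq_of_hit hla hi hh.1 hh.2 hix hiy)

theorem coeff_eq_zero_of_inact (h : IsSpecial n act p q u v w)
    (h0 : tangentSum u v w a b c = 0) {i : ι} (hi : ¬ act i) :
    c i = 0 := by
  have hlt := h.pattern.lt
  have hle := h.pattern.le
  have hAi : Hit n act p i (p i) := .inl rfl
  have hBi : Hit n act q i (q i) := .inl rfl
  have finish : ∀ j j', act j → act j' → j ≠ j' → ∀ s t : K, s • w j + c i = 0 →
      t • w j' + c i = 0 → c i = 0 := by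
    intro j j' hj hj' hne s t e1 e2
    have := (h.right_indep j j' hj hj' hne s t (add_right_cancel (e1.trans e2.symm))).1
    simpa [this] using e1
  rcases h.pattern.cell i hi with ⟨h1, h2, h3, h4, h5⟩ | ⟨h1, h2, h3, h4⟩ | ⟨h1, h2, h3, h4⟩
  · funext z
    have h1 := (Fintype.sum_eq_single (f := term u v w a b c ⟨p i, h2⟩ ⟨q i, h4⟩ z) i
      fun l hl => ?_).symm.trans (congrFun (congrFun (congrFun h0 _) _) z)
    · rwa [h.term_inact hi z hAi hBi] at h1
    · by_cases hla : act l
      · have := (h.pattern.act_lt l hla).1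
        exact h.term_act_eq_zero hla z (by dsimp only; omega) (by dsimp only; omega)
      · exact h.term_inact_eq_zero hla z fun hh =>
          hl (h.pattern.eq_of_hit hla hi hh.1 hh.2 hAi hBi)
  · obtain ⟨j, hj, hpj⟩ := h.pattern.act_surj (p i) (by omega)
    obtain ⟨j', hj', hpj'⟩ := h.pattern.act_surj (p i + 1) (by omega)
    refine finish j j' hj hj' (fun e => by subst e; omega) _ _
      (h.row_eq h0 hi hj (x := ⟨p i, by omega⟩) (y := ⟨q i, by omega⟩) hpj.symm h3 hAi hBi)
      (h.row_eq h0 hi hj' (x := ⟨p i + 1, by omega⟩) (y := ⟨q i, by omega⟩) hpj'.symm h3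
        (.inr ⟨hi, by omega, rfl⟩) hBi)
  · obtain ⟨j, hj, hpj⟩ := h.pattern.act_surj (q i) (by omega)
    obtain ⟨j', hj', hpj'⟩ := h.pattern.act_surj (q i + 1) (by omega)
    refine finish j j' hj hj' (fun e => by subst e; omega) _ _
      (h.col_eq h0 hi hj (x := ⟨p i, by omega⟩) (y := ⟨q i, by omega⟩) hpj.symm h3 hAi hBi)
      (h.col_eq h0 hi hj' (x := ⟨p i, by omega⟩) (y := ⟨q i + 1, by omega⟩) hpj'.symm h3
        hAi (.inr ⟨hi, by omega, rfl⟩))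

theorem term_inact_of_tangentSum_eq_zero (h : IsSpecial n act p q u v w)
    (h0 : tangentSum u v w a b c = 0) {i : ι} (hi : ¬ act i)
    (x : Fin A) (y : Fin B) (z : γ) : term u v w a b c x y z i = 0 := by
  have hw : w i z = 0 := congrFun (h.right_zero i hi) z
  simp [term, hw, h.coeff_eq_zero_of_inact h0 hi]

theorem mid_coeff (h : IsSpecial n act p q u v w)
    (h0 : tangentSum u v w a b c = 0) {i : ι} (hi : act i) {x : Fin A} {y : Fin B}
    (hx : (x : ℕ) = p i) (hy : (y : ℕ) ≠ p i) : b i y = 0 := by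
  have hpi := (h.pattern.act_lt i hi).1
  by_cases hyn : (y : ℕ) < n
  · obtain ⟨j, hj, hpj⟩ := h.pattern.act_surj y hyn
    have hij : i ≠ j := fun e => hy (by rw [← hpj, e])
    refine (h.right_indep i j hi hj hij (b i y) (-a j x) ?_).1
    funext z
    have h1 := (Fintype.sum_eq_add (f := term u v w a b c x y z) i j hij
      fun l hl => ?_).symm.trans (congrFun (congrFun (congrFun h0 x) y) z)
    · rw [h.term_act_left hi z hx hy, h.term_act_mid hj z (by omega) hpj.symm] at h1
      simp only [Pi.smul_apply, smul_eq_mul, Pi.zero_apply] at h1 ⊢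
      linear_combination h1
    · by_cases hla : act l
      · have h1 : p l ≠ p i := fun e => hl.1 (h.pattern.act_inj l i hla hi e)
        have h2 : p l ≠ p j := fun e => hl.2 (h.pattern.act_inj l j hla hj e)
        exact h.term_act_eq_zero hla z (by omega) (by omega)
      · exact h.term_inact_of_tangentSum_eq_zero h0 hla x y z
  · obtain ⟨z, hz⟩ := Function.ne_iff.mp (h.right_ne_zero i hi)
    have h1 := (Fintype.sum_eq_single (f := term u v w a b c x y z) i
      fun l hl => ?_).symm.trans (congrFun (congrFun (congrFun h0 x) y) z)
    · rw [h.term_act_left hi z hx hy] at h1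
      exact (mul_eq_zero.mp h1).resolve_right hz
    · by_cases hla : act l
      · have h1 : p l ≠ p i := fun e => hl (h.pattern.act_inj l i hla hi e)
        have := (h.pattern.act_lt l hla).1
        exact h.term_act_eq_zero hla z (by omega) (by omega)
      · exact h.term_inact_of_tangentSum_eq_zero h0 hla x y z

theorem left_coeff (h : IsSpecial n act p q u v w)
    (h0 : tangentSum u v w a b c = 0) {i : ι} (hi : act i) {x : Fin A} {y : Fin B}
    (hx : (x : ℕ) ≠ p i) (hy : (y : ℕ) = p i) : a i x = 0 := by
  have hpi := (h.pattern.act_lt i hi).1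
  by_cases hyn : (x : ℕ) < n
  · obtain ⟨j, hj, hpj⟩ := h.pattern.act_surj x hyn
    have hij : i ≠ j := fun e => hx (by rw [← hpj, e])
    refine (h.right_indep i j hi hj hij (a i x) (-b j y) ?_).1
    funext z
    have h1 := (Fintype.sum_eq_add (f := term u v w a b c x y z) i j hij
      fun l hl => ?_).symm.trans (congrFun (congrFun (congrFun h0 x) y) z)
    · rw [h.term_act_mid hi z hx hy, h.term_act_left hj z hpj.symm (by omega)] at h1
      simp only [Pi.smul_apply, smul_eq_mul, Pi.zero_apply] at h1 ⊢
      linear_combination h1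
    · by_cases hla : act l
      · have h1 : p l ≠ p i := fun e => hl.1 (h.pattern.act_inj l i hla hi e)
        have h2 : p l ≠ p j := fun e => hl.2 (h.pattern.act_inj l j hla hj e)
        exact h.term_act_eq_zero hla z (by omega) (by omega)
      · exact h.term_inact_of_tangentSum_eq_zero h0 hla x y z
  · obtain ⟨z, hz⟩ := Function.ne_iff.mp (h.right_ne_zero i hi)
    have h1 := (Fintype.sum_eq_single (f := term u v w a b c x y z) i
      fun l hl => ?_).symm.trans (congrFun (congrFun (congrFun h0 x) y) z)
    · rw [h.term_act_mid hi z hx hy] at h1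
      exact (mul_eq_zero.mp h1).resolve_right hz
    · by_cases hla : act l
      · have h1 : p l ≠ p i := fun e => hl (h.pattern.act_inj l i hla hi e)
        have := (h.pattern.act_lt l hla).1
        exact h.term_act_eq_zero hla z (by omega) (by omega)
      · exact h.term_inact_of_tangentSum_eq_zero h0 hla x y z

theorem indep (h : IsSpecial n act p q u v w)
    (h0 : tangentSum u v w a b c = 0) (i : ι) : (w i = 0 → c i = 0) ∧
    (w i ≠ 0 → ∃ l m : K, a i = l • u i ∧ b i = m • v i ∧ c i = (-(l + m)) • w i) := by
  refine ⟨fun hw => h.coeff_eq_zero_of_inact h0 fun hi => h.right_ne_zero i hi hw, fun hw => ?_⟩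
  have hi := h.act_of_right_ne_zero hw
  have hpi := (h.pattern.act_lt i hi).1
  have hlt := h.pattern.lt
  have hle := h.pattern.le
  let x₀ : Fin A := ⟨p i, by omega⟩
  let y₀ : Fin B := ⟨p i, by omega⟩
  refine ⟨a i x₀, b i y₀, funext fun x => ?_, funext fun y => ?_, funext fun z => ?_⟩
  · rw [Pi.smul_apply, h.left_act hi]
    split_ifs with hx
    · rw [show x = x₀ from Fin.ext hx, smul_eq_mul, mul_one]
    · rw [h.left_coeff h0 hi (y := y₀) hx rfl, smul_zero]
  · rw [Pi.smul_apply, h.mid_act hi]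
    split_ifs with hx
    · rw [show y = y₀ from Fin.ext hx, smul_eq_mul, mul_one]
    · rw [h.mid_coeff h0 hi (x := x₀) rfl hx, smul_zero]
  · have h1 := (Fintype.sum_eq_single (f := term u v w a b c x₀ y₀ z) i
      fun l hl => ?_).symm.trans (congrFun (congrFun (congrFun h0 x₀) y₀) z)
    · rw [h.term_act_diag hi z rfl rfl] at h1
      simp only [Pi.smul_apply, smul_eq_mul, Pi.zero_apply] at h1 ⊢
      linear_combination h1
    · by_cases hla : act l
      · have h1 : p l ≠ p i := fun e => hl (h.pattern.act_inj l i hla hi e)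
        exact h.term_act_eq_zero hla z h1.symm h1.symm
      · exact h.term_inact_of_tangentSum_eq_zero h0 hla _ _ z

theorem contact (h : IsSpecial n act p q u v w)
    {x : Fin A → K} {y : Fin B → K} {z : γ → K} (hx : x ≠ 0) (hz : z ≠ 0)
    (hc : IsContact u v w x y z) :
    ∃ i, w i ≠ 0 ∧ ∃ l m n : K, x = l • u i ∧ y = m • v i ∧ z = n • w i := by
  have hlt := h.pattern.lt
  have hle := h.pattern.le
  obtain ⟨o, ho⟩ := Function.ne_iff.mp hz
  have hxn : ∀ r : Fin A, n ≤ r → x r = 0 := fun r hr => by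
    have := h.apply_stair (hc.2.1 fun _ => 1) (x := r) (y := ⟨r, by omega⟩) hr hr
      (by dsimp only; omega) o
    simp only [mul_one] at this
    exact (mul_eq_zero.mp this).resolve_right ho
  have hyn : ∀ r : Fin B, n ≤ r → y r = 0 := fun r hr => by
    have := h.apply_stair (hc.1 fun _ => 1) (x := ⟨min r (A - 1), by omega⟩) (y := r)
      (by dsimp only; omega) hr rfl o
    simp only [one_mul] at this
    exact (mul_eq_zero.mp this).resolve_right ho
  have hxz : ∀ (r : Fin A) (i : ι), act i → (r : ℕ) = p i → x r ≠ 0 → ∃ s : K, z = s • w i := by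
    intro r i hi hr hxr
    obtain ⟨s, hs⟩ := h.apply_last_mid (hc.2.1 fun _ => 1) hi (y := ⟨B - 1, by omega⟩) hr
      (by dsimp only; omega)
    refine ⟨(x r)⁻¹ * s, ?_⟩
    rw [mul_smul, ← hs]
    funext q
    simp [inv_mul_cancel_left₀ hxr]
  have hyz : ∀ (r : Fin B) (i : ι), act i → (r : ℕ) = p i → y r ≠ 0 → ∃ s : K, z = s • w i := by
    intro r i hi hr hyr
    obtain ⟨s, hs⟩ := h.apply_last_left (hc.1 fun _ => 1) hi (x := ⟨A - 1, by omega⟩)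
      (by dsimp only; omega) hr
    refine ⟨(y r)⁻¹ * s, ?_⟩
    rw [mul_smul, ← hs]
    funext q
    simp [inv_mul_cancel_left₀ hyr]
  obtain ⟨r, hr⟩ := Function.ne_iff.mp hx
  have hrn : (r : ℕ) < n := by
    by_contra hn
    exact hr (hxn r (by omega))
  obtain ⟨i, hi, hpi⟩ := h.pattern.act_surj r hrn
  obtain ⟨s, hs⟩ := hxz r i hi hpi.symm hr
  have uniq : ∀ j, act j → (∃ t : K, z = t • w j) → j = i := by
    rintro j hj ⟨t, ht⟩
    by_contra hne
    exact hz (by rw [ht, (h.right_indep j i hj hi hne t s (ht ▸ hs)).1, zero_smul])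
  refine ⟨i, h.right_ne_zero i hi, x r, y ⟨r, by omega⟩, s, funext fun r' => ?_,
    funext fun r' => ?_, hs⟩
  · rw [Pi.smul_apply, h.left_act hi]
    split_ifs with hr'
    · rw [show r' = r from Fin.ext (by omega), smul_eq_mul, mul_one]
    · rw [smul_zero]
      by_contra hne
      have hr'n : (r' : ℕ) < n := by
        by_contra hn
        exact hne (hxn r' (by omega))
      obtain ⟨j, hj, hpj⟩ := h.pattern.act_surj r' hr'n
      exact hr' (by rw [← hpj, uniq j hj (hxz r' j hj hpj.symm hne)])
  · rw [Pi.smul_apply, h.mid_act hi]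
    split_ifs with hr'
    · rw [show r' = ⟨r, by omega⟩ from Fin.ext (by dsimp only; omega), smul_eq_mul, mul_one]
    · rw [smul_zero]
      by_contra hne
      have hr'n : (r' : ℕ) < n := by
        by_contra hn
        exact hne (hyn r' (by omega))
      obtain ⟨j, hj, hpj⟩ := h.pattern.act_surj r' hr'n
      exact hr' (by rw [← hpj, uniq j hj (hyz r' j hj hpj.symm hne)])

theorem reduced (h : IsSpecial n act p q u v w)
    {i : ι} (hw : w i ≠ 0) {x : Fin A → K} {y : Fin B → K} {z : γ → K}
    (hc : IsContactDir u v w i x y z) :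
    ∃ l m n : K, x = l • u i ∧ y = m • v i ∧ z = n • w i := by
  have hlt := h.pattern.lt
  have hle := h.pattern.le
  have hi := h.act_of_right_ne_zero hw
  have hpi := (h.pattern.act_lt i hi).1
  obtain ⟨o, ho⟩ := Function.ne_iff.mp hw
  let x₀ : Fin A := ⟨p i, by omega⟩
  let y₀ : Fin B := ⟨p i, by omega⟩
  obtain ⟨s, hs⟩ := h.apply_last_mid (hc.2.1 fun _ => 1) hi (x := x₀) (y := ⟨B - 1, by omega⟩) rfl
    (by dsimp only; omega)
  refine ⟨x x₀, y y₀, s - x x₀, funext fun r => ?_, funext fun r => ?_, funext fun r => ?_⟩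
  · rw [Pi.smul_apply, h.left_act hi]
    split_ifs with hr
    · rw [show r = x₀ from Fin.ext hr, smul_eq_mul, mul_one]
    · rw [smul_zero]
      by_cases hrn : (r : ℕ) < n
      · obtain ⟨j, hj, hpj⟩ := h.pattern.act_surj r hrn
        obtain ⟨t, ht⟩ := h.apply_last_mid (hc.2.1 fun _ => 1) hj (x := r)
          (y := ⟨B - 1, by omega⟩) hpj.symm (by dsimp only; omega)
        refine (h.right_indep i j hi hj (fun e => hr (by rw [e, hpj])) (x r) t ?_).1
        rw [← ht]
        funext q
        simp [h.left_act hi, hr]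
      · have := h.apply_stair (hc.2.1 fun _ => 1) (x := r) (y := ⟨r, by omega⟩) (by omega)
          (by dsimp only; omega) (by dsimp only; omega) o
        simp only [h.left_act hi, hr, if_false, zero_mul, add_zero, one_mul] at this
        exact (mul_eq_zero.mp this).resolve_right ho
  · rw [Pi.smul_apply, h.mid_act hi]
    split_ifs with hr
    · rw [show r = y₀ from Fin.ext hr, smul_eq_mul, mul_one]
    · rw [smul_zero]
      by_cases hrn : (r : ℕ) < n
      · obtain ⟨j, hj, hpj⟩ := h.pattern.act_surj r hrn
        obtain ⟨t, ht⟩ := h.apply_last_left (hc.1 fun _ => 1) hj (x := ⟨A - 1, by omega⟩)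
          (y := r) (by dsimp only; omega) hpj.symm
        refine (h.right_indep i j hi hj (fun e => hr (by rw [e, hpj])) (y r) t ?_).1
        rw [← ht]
        funext q
        simp [h.mid_act hi, hr]
      · have := h.apply_stair (hc.1 fun _ => 1) (x := ⟨min r (A - 1), by omega⟩) (y := r)
          (by dsimp only; omega) (by omega) rfl o
        simp only [h.mid_act hi, hr, if_false, zero_mul, add_zero, one_mul] at this
        exact (mul_eq_zero.mp this).resolve_right ho
  · have := congrFun hs r
    simp only [h.left_act hi, x₀, if_true, one_mul, Pi.smul_apply, smul_eq_mul] at this ⊢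
    linear_combination this

theorem good (h : IsSpecial n act p q u v w) : Good u v w where
  indep _ _ _ h0 i := h.indep h0 i
  contact _ _ _ hx _ hz hc := h.contact hx hz hc
  reduced _ hi _ _ _ hc := h.reduced hi hc

end IsSpecial
end SpecialBlock

section Numbers

theorem block_lt {A B C m k n : ℤ} (hA : 4 ≤ A) (hAB : A ≤ B) (hBC : B ≤ C) (hm : C ≤ 2 * m + 1)
    (hk : k * (A + B + C - 2) ≤ C * (A * B - (A + B + C - 2)))
    (hn : m * n ≤ k + m - 1) : n < A := by
  by_contra! hcon
  have h1 : m * (A - 1) + 1 ≤ k := by nlinarith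
  have hS : 2 * B + 2 ≤ A + B + C - 2 := by linarith
  have h2 : 2 * k + 2 * C ≤ C * A := by
    have : (2 * k + 2 * C) * (A + B + C - 2) ≤ C * A * (A + B + C - 2) := by
      nlinarith [mul_nonneg (by linarith : (0 : ℤ) ≤ C) (by linarith : (0 : ℤ) ≤ A),
        mul_le_mul_of_nonneg_left hS (mul_nonneg (by linarith : (0 : ℤ) ≤ C)
          (by linarith : (0 : ℤ) ≤ A))]
    exact le_of_mul_le_mul_right this (by linarith)
  nlinarith

theorem block_count_odd {A B C m k n : ℤ} (hA : 4 ≤ A) (hAB : A ≤ B) (hBC : B ≤ C)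
    (hm : C = 2 * m ∨ C = 2 * m + 1)
    (hk : k * (A + B + C - 2) ≤ C * (A * B - (A + B + C - 2)))
    (hn : m * n ≤ k + m - 1) :
    2 * k + (A + B - 4) * n + (A + B) ≤ 2 * (A * B) - 2 * B + 2 := by
  have hS : 0 < A + B + C - 2 := by linarith
  have hm0 : 0 < m := by omega
  have hCB : C * (C - B) ≥ 0 := mul_nonneg (by linarith) (by linarith)
  have key : k * (2 * m + A + B - 4) ≤
      m * (2 * (A * B) - 2 * B + 2) - (A + B - 4) * (m - 1) - (A + B) * m := by
    refine le_of_mul_le_mul_right ?_ hS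
    have h1 := mul_le_mul_of_nonneg_right hk (by linarith : 0 ≤ 2 * m + A + B - 4)
    have hAB0 : 0 < A * B := mul_pos (by linarith) (by linarith)
    refine le_trans (by linarith) (h1.trans ?_)
    rcases hm with rfl | rfl
    · have h2 : -(2 * m * (2 * m - B)) + 2 * m - A - B + 4 ≤ 0 := by
        rcases hBC.eq_or_lt with h | h
        · rw [← h]; nlinarith
        · nlinarith
      nlinarith [mul_nonneg hS.le (neg_nonneg.mpr h2), mul_pos hm0 hAB0]
    · have h2 : 2 * (2 * m + 1) - 2 * A - 3 * B - (2 * m + 1) * (2 * m + 1 - B) + 7 ≤ 0 := by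
        rcases hBC.eq_or_lt with h | h
        · rw [← h]; nlinarith
        · rcases (Int.add_one_le_iff.mpr h).eq_or_lt with h' | h'
          · rw [← h']; nlinarith
          · nlinarith
      nlinarith [mul_nonneg hS.le (neg_nonneg.mpr h2),
        mul_nonneg hAB0.le (by linarith : 0 ≤ 2 + 2 * (2 * m + 1) - A - B)]
  refine le_of_mul_le_mul_left ?_ hm0
  nlinarith [mul_le_mul_of_nonneg_left hn (by linarith : 0 ≤ A + B - 4)]

/-- The number of cells of a pattern is sufficient in the blocks of size two. -/
theorem block_count {A B C m k n : ℕ} (hA : 4 ≤ A) (hAB : A ≤ B) (hBC : B ≤ C) (hm : m = C / 2)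
    (hk : k * (A + B + C - 2) + C * (A + B + C - 2) ≤ A * B * C) (hn : m * n ≤ k + m - 1) :
    n < A ∧ k ≤ n + ((A - n - 1) * (B - n) + (n / 2 * (B - n - 1) + n / 2 * (A - n - 1))) := by
  have hm0 : 0 < m := by omega
  have hS : 2 ≤ A + B + C := by omega
  zify [hS] at hk
  have hn' : (m : ℤ) * n ≤ k + m - 1 := by
    have : m * n + 1 ≤ k + m := by omega
    zify at this
    linarith
  have hk' : (k : ℤ) * (A + B + C - 2) ≤ C * (A * B - (A + B + C - 2)) := by linarith
  have hlt : n < A := by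
    have := block_lt (A := A) (B := B) (C := C) (m := m) (k := k) (n := n) (by omega) (by omega)
      (by omega) (by omega) hk' hn'
    omega
  have hodd := block_count_odd (A := A) (B := B) (C := C) (m := m) (k := k) (n := n) (by omega)
    (by omega) (by omega) (by omega) hk' hn'
  refine ⟨hlt, ?_⟩
  obtain ⟨A', rfl⟩ := Nat.exists_eq_add_of_lt hlt
  obtain ⟨B', rfl⟩ := Nat.exists_eq_add_of_le hAB
  rw [show n + A' + 1 - n - 1 = A' by omega, show n + A' + 1 + B' - n = A' + B' + 1 by omega,
    show A' + B' + 1 - 1 = A' + B' by omega]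
  zify at hodd ⊢
  obtain ⟨h, rfl | rfl⟩ := Nat.even_or_odd' n
  · push_cast at hodd ⊢
    rw [show (2 * (h : ℤ)) / 2 = h by omega]
    nlinarith
  · push_cast at hodd ⊢
    rw [show (2 * (h : ℤ) + 1) / 2 = h by omega]
    nlinarith

theorem empty_block_count {A B C k : ℕ} (hA : 4 ≤ A) (hAB : A ≤ B) (hBC : B ≤ C)
    (hk : k * (A + B + C - 2) + C * (A + B + C - 2) ≤ A * B * C) : k ≤ (A - 1) * B := by
  have hS : 2 ≤ A + B + C := by omega
  have h1 : 1 ≤ A := by omega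
  zify [hS, h1] at hk ⊢
  have : (k + C : ℤ) * C ≤ A * B * C := by nlinarith
  have h2 : (k + C : ℤ) ≤ A * B := le_of_mul_le_mul_right this (by omega)
  have : (B : ℤ) ≤ C := by exact_mod_cast hBC
  linarith

end Numbers

section Pattern

/-- An injective enumeration of the cells available to the inactive indices. -/
def cellOf (A B n : ℕ) :
    (Fin (A - n - 1) × Fin (B - n)) ⊕ (Fin (n / 2) × Fin (B - n - 1)) ⊕
      (Fin (n / 2) × Fin (A - n - 1)) → ℕ × ℕ
  | .inl (s, t) => (if n + s < min (n + t : ℕ) (A - 1) then n + s else n + s + 1, n + t)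
  | .inr (.inl (s, t)) => (2 * s, n + t)
  | .inr (.inr (s, t)) => (n + t, 2 * s)

theorem cellOf_injective (A B n : ℕ) : Function.Injective (cellOf A B n) := by
  rintro (⟨⟨s, hs⟩, ⟨t, ht⟩⟩ | ⟨⟨s, hs⟩, ⟨t, ht⟩⟩ | ⟨⟨s, hs⟩, ⟨t, ht⟩⟩)
    (⟨⟨s', hs'⟩, ⟨t', ht'⟩⟩ | ⟨⟨s', hs'⟩, ⟨t', ht'⟩⟩ | ⟨⟨s', hs'⟩, ⟨t', ht'⟩⟩) h <;>
  simp only [cellOf, Prod.mk.injEq] at h <;>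
  simp only [Sum.inl.injEq, Sum.inr.injEq, Prod.mk.injEq, Fin.mk.injEq, reduceCtorEq] <;>
  obtain ⟨h1, h2⟩ := h <;> (try split_ifs at h1) <;> omega

theorem cellOf_mem {A B n : ℕ} (hn : n < A) (hAB : A ≤ B) (s) :
    (n ≤ (cellOf A B n s).1 ∧ (cellOf A B n s).1 < A ∧ n ≤ (cellOf A B n s).2 ∧
      (cellOf A B n s).2 < B ∧ (cellOf A B n s).1 ≠ min (cellOf A B n s).2 (A - 1)) ∨
    ((cellOf A B n s).1 % 2 = 0 ∧ (cellOf A B n s).1 + 1 < n ∧ n ≤ (cellOf A B n s).2 ∧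
      (cellOf A B n s).2 + 1 < B) ∨
    ((cellOf A B n s).2 % 2 = 0 ∧ (cellOf A B n s).2 + 1 < n ∧ n ≤ (cellOf A B n s).1 ∧
      (cellOf A B n s).1 + 1 < A) := by
  rcases s with ⟨⟨s, hs⟩, ⟨t, ht⟩⟩ | ⟨⟨s, hs⟩, ⟨t, ht⟩⟩ | ⟨⟨s, hs⟩, ⟨t, ht⟩⟩ <;>
  simp only [cellOf]
  · left
    split_ifs <;> omega
  · right; left
    omega
  · right; right
    omega

theorem exists_pattern {ι : Type*} [Fintype ι] {A B n : ℕ} (act : ι → Prop) [DecidablePred act]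
    (hn : n < A) (hAB : A ≤ B) (hact : Fintype.card {i // act i} = n)
    (hcard : Fintype.card ι ≤
      n + ((A - n - 1) * (B - n) + (n / 2 * (B - n - 1) + n / 2 * (A - n - 1)))) :
    ∃ p q : ι → ℕ, IsPattern A B n act p q := by
  let e : {i // act i} ≃ Fin n := Fintype.equivFinOfCardEq hact
  have hle : Fintype.card {i // ¬ act i} ≤ Fintype.card
      ((Fin (A - n - 1) × Fin (B - n)) ⊕ (Fin (n / 2) × Fin (B - n - 1)) ⊕
        (Fin (n / 2) × Fin (A - n - 1))) := by
    rw [Fintype.card_subtype_compl, hact]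
    simp only [Fintype.card_sum, Fintype.card_prod, Fintype.card_fin]
    omega
  obtain ⟨f⟩ := Function.Embedding.nonempty_of_card_le hle
  refine ⟨fun i => if h : act i then e ⟨i, h⟩ else (cellOf A B n (f ⟨i, h⟩)).1,
    fun i => if h : act i then e ⟨i, h⟩ else (cellOf A B n (f ⟨i, h⟩)).2, hn, hAB, ?_, ?_, ?_, ?_, ?_⟩
  · intro i hi
    simp [hi]
  · intro i j hi hj h
    simp only [hi, hj, dif_pos] at h
    simpa using e.injective (Fin.ext h)
  · intro r hr
    refine ⟨(e.symm ⟨r, hr⟩).1, (e.symm ⟨r, hr⟩).2, ?_⟩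
    simp [(e.symm ⟨r, hr⟩).2]
  · intro i hi
    simp only [hi, dif_neg, not_false_eq_true]
    exact cellOf_mem hn hAB _
  · intro i j hi hj h1 h2
    simp only [hi, hj, dif_neg, not_false_eq_true] at h1 h2
    simpa using f.injective (cellOf_injective A B n (Prod.ext h1 h2))

/-- The residue classes modulo `C / 2` (together with an empty class) carry patterns. -/
theorem exists_pattern_mod {A B C k : ℕ} (hA : 4 ≤ A) (hAB : A ≤ B) (hBC : B ≤ C)
    (hk : k * (A + B + C - 2) + C * (A + B + C - 2) ≤ A * B * C) (j : ℕ) :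
    ∃ (n : ℕ) (p q : Fin k → ℕ), IsPattern A B n (fun i : Fin k => (i : ℕ) % (C / 2) = j) p q := by
  have hm0 : 0 < C / 2 := by omega
  by_cases hj : j < C / 2
  · have hc : Fintype.card {i : Fin k // (i : ℕ) % (C / 2) = j} =
        k.count (fun i => i % (C / 2) = j) := by
      rw [Fintype.card_subtype, Nat.count_eq_card_filter_range,
        ← Finset.card_map Fin.valEmbedding]
      congr 1
      ext x
      simp only [Finset.mem_map, Finset.mem_filter, Finset.mem_univ, true_and,
        Fin.valEmbedding_apply, Finset.mem_range]
      exact ⟨fun ⟨i, hi, hx⟩ => hx ▸ ⟨i.2, hi⟩, fun ⟨hx, hxj⟩ => ⟨⟨x, hx⟩, hxj, rfl⟩⟩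
    have hcount : k.count (fun i => i % (C / 2) = j) =
        k / (C / 2) + if j % (C / 2) < k % (C / 2) then 1 else 0 := by
      rw [← Nat.count_modEq_card k hm0]
      simp only [Nat.ModEq, Nat.mod_eq_of_lt hj]
    have hn : C / 2 * k.count (fun i => i % (C / 2) = j) ≤ k + C / 2 - 1 := by
      have h1 := Nat.div_add_mod k (C / 2)
      rw [hcount, mul_add]
      split_ifs
      · rw [mul_one]; omega
      · rw [mul_zero]; omega
    obtain ⟨hlt, hle⟩ := block_count hA hAB hBC rfl hk hn
    exact ⟨_, exists_pattern _ hlt hAB hc (by simpa using hle)⟩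
  · refine ⟨0, exists_pattern (n := 0) _ (by omega) hAB ?_ ?_⟩
    · rw [Fintype.card_eq_zero_iff]
      exact ⟨fun i => hj (i.2 ▸ Nat.mod_lt _ hm0)⟩
    · simpa using empty_block_count hA hAB hBC hk

end Pattern

section Generic
open MvPolynomial

/-- Coordinates of `k` triples of vectors of lengths `A`, `B`, `C`. -/
abbrev Coord (A B C k : ℕ) : Type := (Fin k × Fin A) ⊕ (Fin k × Fin B) ⊕ (Fin k × Fin C)

variable {A B C k : ℕ}

/-- The generic first vectors. -/
abbrev genericLeft (A B C k : ℕ) (i : Fin k) (x : Fin A) : MvPolynomial (Coord A B C k) ℂ :=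
  X (.inl (i, x))

/-- The generic second vectors. -/
abbrev genericMid (A B C k : ℕ) (i : Fin k) (y : Fin B) : MvPolynomial (Coord A B C k) ℂ :=
  X (.inr (.inl (i, y)))

/-- The generic third vectors. -/
abbrev genericRight (A B C k : ℕ) (i : Fin k) (z : Fin C) : MvPolynomial (Coord A B C k) ℂ :=
  X (.inr (.inr (i, z)))

/-- Kill the coordinates of the third vectors outside their block. -/
def killOff (A B C k : ℕ) : MvPolynomial (Coord A B C k) ℂ →ₐ[ℂ] MvPolynomial (Coord A B C k) ℂ :=
  aeval (Sum.elim (fun s => X (.inl s)) (Sum.elim (fun s => X (.inr (.inl s)))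
    (fun s => if (s.2 : ℕ) / 2 = (s.1 : ℕ) % (C / 2) then X (.inr (.inr s)) else 0)))

open Classical in
/-- The coordinates of a special configuration. -/
def specialPoint (A B C k n : ℕ) (act : Fin k → Prop) (p q : Fin k → ℕ) : Coord A B C k → ℂ :=
  Sum.elim (fun s => if Hit n act p s.1 s.2 then 1 else 0)
    (Sum.elim (fun s => if Hit n act q s.1 s.2 then 1 else 0)
      (fun s => if (s.2 : ℕ) / 2 = (s.1 : ℕ) % (C / 2) then
        (if (s.2 : ℕ) % 2 = 0 then 1 else (s.1 : ℂ)) else 0))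

theorem aeval_specialPoint_killOff {n : ℕ} {act : Fin k → Prop} {p q : Fin k → ℕ}
    (f : MvPolynomial (Coord A B C k) ℂ) :
    aeval (specialPoint A B C k n act p q) (killOff A B C k f) =
      aeval (specialPoint A B C k n act p q) f := by
  rw [← AlgHom.comp_apply]
  congr 1
  ext s
  rcases s with s | s | s
  · simp [killOff]
  · simp [killOff]
  · simp only [killOff, AlgHom.comp_apply, aeval_X, Sum.elim_inr]
    split_ifs with h
    · simp
    · simp [specialPoint, h]

theorem IsPattern.left_lt {ι : Type*} {n : ℕ} {act : ι → Prop} {p q : ι → ℕ}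
    (h : IsPattern A B n act p q) (i : ι) : p i < A := by
  have h1 := h.lt
  by_cases hi : act i
  · have := h.act_lt i hi
    omega
  · have := h.cell i hi
    omega

theorem IsPattern.mid_lt {ι : Type*} {n : ℕ} {act : ι → Prop} {p q : ι → ℕ}
    (h : IsPattern A B n act p q) (i : ι) : q i < B := by
  have h1 := h.lt
  have h2 := h.le
  by_cases hi : act i
  · have := h.act_lt i hi
    omega
  · have := h.cell i hi
    omega

theorem good_block_special {κ : Type*} [Field κ] {n : ℕ} {p q : Fin k → ℕ} {j : ℕ} (hC : 2 ≤ C)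
    (hpat : IsPattern A B n (fun i : Fin k => (i : ℕ) % (C / 2) = j) p q)
    (χ : MvPolynomial (Coord A B C k) ℂ →+* κ)
    (hχ : ∀ f, χ f = 0 ↔ aeval (specialPoint A B C k n (fun i => (i : ℕ) % (C / 2) = j) p q) f = 0) :
    Good (fun i x => χ (genericLeft A B C k i x)) (fun i y => χ (genericMid A B C k i y))
      (fun i (z : {z : Fin C // (z : ℕ) / 2 = j}) => χ (genericRight A B C k i z)) := by
  have hX : ∀ s, χ (X s) =
      χ (MvPolynomial.C (specialPoint A B C k n (fun i => (i : ℕ) % (C / 2) = j) p q s)) := by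
    intro s
    rw [← sub_eq_zero, ← map_sub, hχ]
    simp
  have hCne : ∀ t : ℂ, t ≠ 0 → χ (MvPolynomial.C t) ≠ 0 := by
    intro t ht h
    rw [hχ] at h
    exact ht (by simpa using h)
  have hm0 : 0 < C / 2 := by omega
  have hjlt : ∀ i : Fin k, (i : ℕ) % (C / 2) = j → 2 * j + 1 < C := fun i hi => by
    have := Nat.mod_lt (i : ℕ) hm0
    omega
  have hfst : ∀ (i : Fin k) (hi : (i : ℕ) % (C / 2) = j),
      χ (genericRight A B C k i ⟨2 * j, by have := hjlt i hi; omega⟩) = 1 := by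
    intro i hi
    rw [genericRight, hX]
    simp [specialPoint, hi]
  have hsnd : ∀ (i : Fin k) (hi : (i : ℕ) % (C / 2) = j),
      χ (genericRight A B C k i ⟨2 * j + 1, hjlt i hi⟩) = χ (MvPolynomial.C (i : ℂ)) := by
    intro i hi
    rw [genericRight, hX]
    have h1 : (2 * j + 1) / 2 = j := by omega
    have h2 : (2 * j + 1) % 2 = 1 := by omega
    simp [specialPoint, hi, h1, h2]
  refine IsSpecial.good (n := n) (act := fun i : Fin k => (i : ℕ) % (C / 2) = j) (p := p) (q := q)
    ⟨hpat, ?_, ?_, ?_, ?_, ?_, ?_, ?_⟩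
  · intro i x h
    rw [genericLeft, hX]
    simp [specialPoint, h]
  · intro i x h
    rw [genericLeft, hX]
    simp [specialPoint, h]
  · intro i x h
    rw [genericMid, hX]
    simp [specialPoint, h]
  · intro i x h
    rw [genericMid, hX]
    simp [specialPoint, h]
  · intro i hi
    funext z
    rw [genericRight, hX]
    have : ¬ ((z : Fin C) : ℕ) / 2 = (i : ℕ) % (C / 2) := fun h => hi (by rw [← h, z.2])
    simp [specialPoint, this]
  · intro i hi h
    have := congrFun h ⟨⟨2 * j, by have := hjlt i hi; omega⟩, by simp⟩
    simp only [hfst i hi] at this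
    exact one_ne_zero this
  · intro i i' hi hi' hne s t h
    have e1 := congrFun h ⟨⟨2 * j, by have := hjlt i hi; omega⟩, by simp⟩
    have e2 := congrFun h ⟨⟨2 * j + 1, hjlt i hi⟩, by dsimp only; omega⟩
    simp only [Pi.smul_apply, smul_eq_mul, hfst i hi, hfst i' hi', hsnd i hi, hsnd i' hi',
      mul_one] at e1 e2
    subst e1
    have hs : s = 0 := by
      have h3 : s * χ (MvPolynomial.C ((i : ℂ) - (i' : ℂ))) = 0 := by
        rw [map_sub, map_sub, mul_sub, e2, sub_self]
      refine (mul_eq_zero.mp h3).resolve_right (hCne _ ?_)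
      rw [sub_ne_zero]
      exact fun h => hne (Fin.ext (by exact_mod_cast h))
    exact ⟨hs, hs⟩

theorem good_block {κ : Type*} [Field κ] {n : ℕ} {p q : Fin k → ℕ} {j : ℕ} (hC : 2 ≤ C)
    (hpat : IsPattern A B n (fun i : Fin k => (i : ℕ) % (C / 2) = j) p q)
    (χ : MvPolynomial (Coord A B C k) ℂ →+* κ) (hχ : ∀ f, χ f = 0 ↔ killOff A B C k f = 0) :
    Good (fun i x => χ (genericLeft A B C k i x)) (fun i y => χ (genericMid A B C k i y))
      (fun i (z : {z : Fin C // (z : ℕ) / 2 = j}) => χ (genericRight A B C k i z)) := by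
  have hm0 : 0 < C / 2 := by omega
  refine Good.of_specialization χ
    (aeval (specialPoint A B C k n (fun i => (i : ℕ) % (C / 2) = j) p q) : _ →ₐ[ℂ] ℂ).toRingHom
    ?_ (fun i => ⟨p i, hpat.left_lt i⟩) (fun i => ⟨q i, hpat.mid_lt i⟩) ?_ ?_ ?_ ?_
  · intro f hf
    change aeval _ f = _
    rw [← aeval_specialPoint_killOff, (hχ f).mp hf, map_zero]
  · intro i
    simp [specialPoint, Hit]
  · intro i
    simp [specialPoint, Hit]
  · intro i
    by_cases hi : (i : ℕ) % (C / 2) = j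
    · have := Nat.mod_lt (i : ℕ) hm0
      exact .inr ⟨⟨⟨2 * j, by omega⟩, by simp⟩, by simp [specialPoint, hi]⟩
    · refine .inl fun z => (hχ _).mpr ?_
      have : ¬ ((z : Fin C) : ℕ) / 2 = (i : ℕ) % (C / 2) := fun h => hi (by rw [← h, z.2])
      simp [killOff, this]
  · intro κ' _ ψ hker
    exact good_block_special hC hpat ψ hker

/-- The generic configuration is good in the range of the theorem. -/
theorem good_generic (hA : 4 ≤ A) (hAB : A ≤ B) (hBC : B ≤ C)
    (hk : k * (A + B + C - 2) + C * (A + B + C - 2) ≤ A * B * C) {K : Type*} [Field K]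
    (φ : MvPolynomial (Coord A B C k) ℂ →+* K) (hφ : Function.Injective φ) :
    Good (fun i x => φ (genericLeft A B C k i x)) (fun i y => φ (genericMid A B C k i y))
      (fun i z => φ (genericRight A B C k i z)) := by
  have hm0 : 0 < C / 2 := by omega
  have hleft : ∀ i, killOff A B C k (genericLeft A B C k i ⟨0, by omega⟩) ≠ 0 := fun i => by
    simp [killOff]
  have hmid : ∀ i, killOff A B C k (genericMid A B C k i ⟨0, by omega⟩) ≠ 0 := fun i => by
    simp [killOff]
  have hright : ∀ i, ∃ z, killOff A B C k (genericRight A B C k i z) ≠ 0 := fun i => by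
    have := Nat.mod_lt (i : ℕ) hm0
    exact ⟨⟨2 * ((i : ℕ) % (C / 2)), by omega⟩, by simp [killOff]⟩
  refine Good.of_specialization φ (killOff A B C k).toRingHom (fun f hf => ?_)
    (fun _ => ⟨0, by omega⟩) (fun _ => ⟨0, by omega⟩) hleft hmid (fun i => .inr (hright i)) ?_
  · rw [(map_eq_zero_iff φ hφ).mp hf, map_zero]
  · intro κ _ χ hχ
    refine Good.of_block (π := fun z => (z : ℕ) / 2) (g := fun i => (i : ℕ) % (C / 2))
      ?_ ?_ ?_ ?_ fun j => ?_
    · exact fun i h => hleft i ((hχ _).mp (congrFun h _))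
    · exact fun i h => hmid i ((hχ _).mp (congrFun h _))
    · intro i h
      obtain ⟨z, hz⟩ := hright i
      exact hz ((hχ _).mp (congrFun h z))
    · intro i z hz
      by_contra hne
      exact hz ((hχ _).mpr (by simp [killOff, hne]))
    · obtain ⟨n, p, q, hpat⟩ := exists_pattern_mod hA hAB hBC hk j
      exact good_block (by omega) hpat χ hχ

end Generic

section Derivative

/-- A homomorphism from a subfield of characteristic zero to a nilpotent thickening extends to
the whole field. -/
theorem exists_section_extending {Q K B : Type*} [Field Q] [CharZero Q] [Field K] [CommRing B]
    (f : Q →+* K) (h : Q →+* B) (π : B →+* K) (hπ : Function.Surjective π)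
    (hker : IsNilpotent (RingHom.ker π)) (hcomp : π.comp h = f) :
    ∃ θ : K →+* B, π.comp θ = RingHom.id K ∧ θ.comp f = h := by
  let _ := f.toAlgebra
  let _ := h.toAlgebra
  let π' : B →ₐ[Q] K := { π with commutes' := fun r => RingHom.congr_fun hcomp r }
  obtain ⟨_, b, hb⟩ := exists_isTranscendenceBasis' Q K
  have := hb.isAlgebraic_field
  have : Algebra.FormallySmooth Q K := .of_algebraicIndependent_of_isSeparable hb.1
  let θ := Algebra.FormallySmooth.liftOfSurjective (AlgHom.id Q K) π' hπ hker
  refine ⟨θ.toRingHom, ?_, ?_⟩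
  · ext x
    exact Algebra.FormallySmooth.liftOfSurjective_apply (AlgHom.id Q K) π' hπ hker x
  · ext x
    exact θ.commutes x

open MvPolynomial TrivSqZeroExt in
/-- Algebraically independent elements of a field of characteristic zero have derivations with
prescribed values. -/
theorem exists_derivative {σ K : Type*} [Field K] (φ : MvPolynomial σ ℂ →+* K)
    (hφ : Function.Injective φ) (d : σ → K) :
    ∃ θ : K →+* TrivSqZeroExt K K, (∀ x, (θ x).fst = x) ∧ ∀ s, (θ (φ (X s))).snd = d s := by
  let g : MvPolynomial σ ℂ →+* TrivSqZeroExt K K :=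
    eval₂Hom ((inlHom K K).comp (φ.comp C)) fun s => inl (φ (X s)) + inr (d s)
  let π : TrivSqZeroExt K K →+* K := (fstHom K K K).toRingHom
  have hπg : π.comp g = φ := by
    ext s
    · simp [π, g]
    · simp [π, g]
  let f : FractionRing (MvPolynomial σ ℂ) →+* K := IsFractionRing.lift hφ
  have hunit : ∀ y : nonZeroDivisors (MvPolynomial σ ℂ), IsUnit (g y) := by
    intro y
    rw [isUnit_iff_isUnit_fst]
    have : (g y).fst = φ y := RingHom.congr_fun hπg y
    rw [this, isUnit_iff_ne_zero, Ne, map_eq_zero_iff φ hφ]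
    exact nonZeroDivisors.ne_zero y.2
  let h : FractionRing (MvPolynomial σ ℂ) →+* TrivSqZeroExt K K := IsLocalization.lift hunit
  have hcomp : π.comp h = f := by
    refine IsLocalization.ringHom_ext (nonZeroDivisors (MvPolynomial σ ℂ)) ?_
    refine RingHom.ext fun x => ?_
    have h1 : h (algebraMap _ _ x) = g x := IsLocalization.lift_eq hunit x
    have h2 : f (algebraMap _ _ x) = φ x := IsFractionRing.lift_algebraMap hφ x
    rw [RingHom.comp_apply, RingHom.comp_apply, RingHom.comp_apply, h1, h2, ← hπg]
    rfl
  have : CharZero (FractionRing (MvPolynomial σ ℂ)) :=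
    charZero_of_injective_algebraMap (IsFractionRing.injective (MvPolynomial σ ℂ) _)
  obtain ⟨θ, h1, h2⟩ := exists_section_extending f h π (fun x => ⟨inl x, by simp [π]⟩)
    ⟨2, kerIdeal_sq K K⟩ hcomp
  refine ⟨θ, fun x => RingHom.congr_fun h1 x, fun s => ?_⟩
  have h3 : f (algebraMap _ _ (X s : MvPolynomial σ ℂ)) = φ (X s) := IsFractionRing.lift_algebraMap hφ _
  have h4 : h (algebraMap _ _ (X s : MvPolynomial σ ℂ)) = g (X s) := IsLocalization.lift_eq hunit _
  have h5 : θ (f (algebraMap _ _ (X s : MvPolynomial σ ℂ))) =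
      h (algebraMap _ _ (X s : MvPolynomial σ ℂ)) := RingHom.congr_fun h2 _
  rw [← h3, h5, h4]
  simp [g]

end Derivative

section Dimension

variable {ι α β γ K : Type*} [Field K]

/-- `tangentSum` as a linear map. -/
def tangentMap [Fintype ι] (u : ι → α → K) (v : ι → β → K) (w : ι → γ → K) :
    ((ι → α → K) × (ι → β → K) × (ι → γ → K)) →ₗ[K] (α → β → γ → K) where
  toFun t := tangentSum u v w t.1 t.2.1 t.2.2
  map_add' s t := by
    funext x y z
    simp only [tangentSum, Prod.fst_add, Prod.snd_add, Pi.add_apply, ← Finset.sum_add_distrib]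
    exact Finset.sum_congr rfl fun i _ => by ring
  map_smul' s t := tangentSum_smul s _ _ _

/-- The trivial relations among tangent vectors, coming from rescaling the factors. -/
def rescaling (u : ι → α → K) (v : ι → β → K) (w : ι → γ → K) :
    ((ι → K) × (ι → K)) →ₗ[K] ((ι → α → K) × (ι → β → K) × (ι → γ → K)) where
  toFun t := (fun i => t.1 i • u i, fun i => t.2 i • v i, fun i => (-(t.1 i + t.2 i)) • w i)
  map_add' s t := by
    ext i x <;> simp <;> ring
  map_smul' s t := by
    ext i x <;> simp <;> ring

theorem range_rescaling_le [Fintype ι] (u : ι → α → K) (v : ι → β → K) (w : ι → γ → K) :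
    LinearMap.range (rescaling u v w) ≤ LinearMap.ker (tangentMap u v w) := by
  rintro _ ⟨t, rfl⟩
  rw [LinearMap.mem_ker]
  funext x y z
  simp only [tangentMap, rescaling, tangentSum, LinearMap.coe_mk, AddHom.coe_mk, Pi.smul_apply,
    smul_eq_mul, Pi.zero_apply]
  exact Finset.sum_eq_zero fun i _ => by ring

theorem rescaling_injective {u : ι → α → K} {v : ι → β → K} (w : ι → γ → K)
    (hu : ∀ i, u i ≠ 0) (hv : ∀ i, v i ≠ 0) : Function.Injective (rescaling u v w) := by
  rw [← LinearMap.ker_eq_bot, LinearMap.ker_eq_bot']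
  rintro ⟨l, m⟩ h
  simp only [rescaling, LinearMap.coe_mk, AddHom.coe_mk, Prod.mk_eq_zero] at h
  ext i
  · exact (smul_eq_zero.mp (congrFun h.1 i)).resolve_right (hu i)
  · exact (smul_eq_zero.mp (congrFun h.2.1 i)).resolve_right (hv i)

variable [Fintype ι] [Fintype α] [Fintype β] [Fintype γ]

/-- If the sum of the tangent spaces at `k` good points lies in the sum of the tangent spaces at
`k` other points, then the two sums agree. -/
theorem Good.inTangent_of_inTangent {u x : ι → α → K} {v y : ι → β → K} {w z : ι → γ → K}
    (hg : Good u v w) (hw : ∀ i, w i ≠ 0) (hx : ∀ i, x i ≠ 0) (hy : ∀ i, y i ≠ 0)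
    (h : ∀ a b c, InTangent x y z (tangentSum u v w a b c)) {t : α → β → γ → K}
    (ht : InTangent x y z t) : InTangent u v w t := by
  have hle : LinearMap.range (tangentMap u v w) ≤ LinearMap.range (tangentMap x y z) := by
    rintro _ ⟨s, rfl⟩
    obtain ⟨a, b, c, e⟩ := h s.1 s.2.1 s.2.2
    exact ⟨(a, b, c), e⟩
  have hker : LinearMap.ker (tangentMap u v w) ≤ LinearMap.range (rescaling u v w) := by
    rintro ⟨a, b, c⟩ hs
    choose l m h1 h2 h3 using fun i => (hg.indep a b c hs i).2 (hw i)
    exact ⟨(l, m), by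
      ext i <;> simp [rescaling, h1, h2, h3]⟩
  have e1 := LinearMap.finrank_range_add_finrank_ker (tangentMap u v w)
  have e2 := LinearMap.finrank_range_add_finrank_ker (tangentMap x y z)
  have e3 := Submodule.finrank_mono hker
  have e4 := Submodule.finrank_mono (range_rescaling_le x y z)
  have e5 := LinearMap.finrank_range_le (rescaling u v w)
  have e6 := LinearMap.finrank_range_of_inj (rescaling_injective z hx hy)
  have heq := Submodule.eq_of_le_of_finrank_le hle (by omega)
  obtain ⟨a, b, c, rfl⟩ := ht
  have : tangentMap x y z (a, b, c) ∈ LinearMap.range (tangentMap u v w) :=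
    heq ▸ LinearMap.mem_range_self _ _
  obtain ⟨s, hs⟩ := this
  exact ⟨s.1, s.2.1, s.2.2, hs⟩

end Dimension

section Uniqueness

open MvPolynomial

variable {A B C k : ℕ} {K : Type*} [Field K]

/-- Any decomposition of the generic tensor of rank `k` has the same summands up to scalars,
provided the generic configuration is good. -/
theorem exists_proportional_of_good (φ : MvPolynomial (Coord A B C k) ℂ →+* K)
    (hφ : Function.Injective φ)
    (hg : Good (fun i x => φ (genericLeft A B C k i x)) (fun i y => φ (genericMid A B C k i y))
      (fun i z => φ (genericRight A B C k i z)))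
    (hw : ∀ i, (fun z => φ (genericRight A B C k i z)) ≠ 0)
    {x : Fin k → Fin A → K} {y : Fin k → Fin B → K} {z : Fin k → Fin C → K}
    (hx : ∀ i, x i ≠ 0) (hy : ∀ i, y i ≠ 0) (hz : ∀ i, z i ≠ 0)
    (heq : ∀ r s q, ∑ i, x i r * y i s * z i q = ∑ i, φ (genericLeft A B C k i r) *
      φ (genericMid A B C k i s) * φ (genericRight A B C k i q)) (j : Fin k) :
    ∃ i, ∃ l m n : K, x j = l • (fun r => φ (genericLeft A B C k i r)) ∧
      y j = m • (fun s => φ (genericMid A B C k i s)) ∧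
      z j = n • (fun q => φ (genericRight A B C k i q)) := by
  have key : ∀ a b c, InTangent x y z (tangentSum (fun i x => φ (genericLeft A B C k i x))
      (fun i y => φ (genericMid A B C k i y)) (fun i z => φ (genericRight A B C k i z)) a b c) := by
    intro a b c
    obtain ⟨θ, h1, h2⟩ := exists_derivative φ hφ
      (Sum.elim (fun s => a s.1 s.2) (Sum.elim (fun s => b s.1 s.2) (fun s => c s.1 s.2)))
    refine ⟨fun i r => (θ (x i r)).snd, fun i r => (θ (y i r)).snd, fun i r => (θ (z i r)).snd, ?_⟩
    funext r s q
    have h := congrArg (fun t => (θ t).snd) (heq r s q)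
    simp only [map_sum, map_mul, TrivSqZeroExt.snd_sum, TrivSqZeroExt.snd_mul,
      TrivSqZeroExt.fst_mul, h1, h2, smul_eq_mul, MulOpposite.smul_eq_mul_unop,
      MulOpposite.unop_op, Sum.elim_inl, Sum.elim_inr] at h
    simp only [tangentSum]
    convert h using 1 <;> exact Finset.sum_congr rfl fun i _ => by ring
  have hself : IsContact x y z (x j) (y j) (z j) := isContact_self j
  obtain ⟨i, -, l, m, n, h⟩ := hg.contact (x j) (y j) (z j) (hx j) (hy j) (hz j)
    ⟨fun e => hg.inTangent_of_inTangent hw hx hy key (hself.1 e),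
      fun e => hg.inTangent_of_inTangent hw hx hy key (hself.2.1 e),
      fun e => hg.inTangent_of_inTangent hw hx hy key (hself.2.2 e)⟩
  exact ⟨i, l, m, n, h⟩

end Uniqueness

section Ultraproduct

open MvPolynomial Filter

variable {A B C k : ℕ}

/-- The properties of a configuration that imply uniqueness of the decomposition. -/
structure IsRigid (u : Fin k → Fin A → ℂ) (v : Fin k → Fin B → ℂ) (w : Fin k → Fin C → ℂ) :
    Prop where
  left_ne : ∀ i, u i ≠ 0
  mid_ne : ∀ i, v i ≠ 0
  right_ne : ∀ i, w i ≠ 0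
  indep : ∀ i, ∀ t : Fin k → ℂ, (∀ r s q, ∑ i, t i * (u i r * v i s * w i q) = 0) → t i = 0
  proportional : ∀ j, ∀ (x : Fin k → Fin A → ℂ) (y : Fin k → Fin B → ℂ) (z : Fin k → Fin C → ℂ),
    (∀ i, x i ≠ 0) → (∀ i, y i ≠ 0) → (∀ i, z i ≠ 0) →
    (∀ r s q, ∑ i, x i r * y i s * z i q = ∑ i, u i r * v i s * w i q) →
    ∃ i, ∃ l m n : ℂ, x j = l • u i ∧ y j = m • v i ∧ z j = n • w i

/-- The configuration with given coordinates is rigid. -/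
def IsRigidPoint (p : Coord A B C k → ℂ) : Prop :=
  IsRigid (fun i x => p (.inl (i, x))) (fun i y => p (.inr (.inl (i, y))))
    (fun i z => p (.inr (.inr (i, z))))

/-- If every nonzero polynomial is nonzero at some point of a family, then some ultrafilter on the
family makes all nonzero polynomials eventually nonzero. -/
theorem exists_generic_ultrafilter {σ I : Type*} (p : I → σ → ℂ)
    (h : ∀ F : MvPolynomial σ ℂ, F ≠ 0 → ∃ i, eval (p i) F ≠ 0) :
    ∃ U : Ultrafilter I, ∀ F : MvPolynomial σ ℂ, F ≠ 0 → ∀ᶠ i in U, eval (p i) F ≠ 0 := by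
  classical
  let N : {F : MvPolynomial σ ℂ // F ≠ 0} → Set I := fun F => {i | eval (p i) F.1 ≠ 0}
  obtain ⟨U, hU⟩ := Ultrafilter.exists_ultrafilter_of_finite_inter_nonempty (Set.range N) (by
    intro T hT
    rw [← Set.image_univ] at hT
    obtain ⟨T', -, rfl⟩ := Finset.subset_set_image_iff.mp hT
    obtain ⟨i, hi⟩ := h (∏ F ∈ T', F.1) (Finset.prod_ne_zero_iff.mpr fun F _ => F.2)
    rw [map_prod, Finset.prod_ne_zero_iff] at hi
    refine ⟨i, ?_⟩
    simp only [Finset.coe_image, Set.sInter_image, Set.mem_iInter]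
    exact fun F hF => hi F hF)
  exact ⟨U, fun F hF => hU ⟨⟨F, hF⟩, rfl⟩⟩

variable {I : Type*} {U : Ultrafilter I}

/-- Functions with values in a finite-dimensional space, viewed as vectors of germs. -/
def germVec (U : Ultrafilter I) {ι : Type*} (x : I → ι → ℂ) (j : ι) : Germ (U : Filter I) ℂ :=
  Germ.coeRingHom (U : Filter I) fun i => x i j

theorem coeRingHom_eq_iff {f g : I → ℂ} :
    Germ.coeRingHom (U : Filter I) f = Germ.coeRingHom (U : Filter I) g ↔ ∀ᶠ i in U, f i = g i :=
  Germ.coe_eq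

theorem coeRingHom_surjective : Function.Surjective (Germ.coeRingHom (R := ℂ) (U : Filter I)) :=
  fun x => Germ.inductionOn x fun f => ⟨f, rfl⟩

theorem germVec_eq_smul_iff {ι : Type*} [Finite ι] {x y : I → ι → ℂ} {f : I → ℂ} :
    germVec U x = Germ.coeRingHom (U : Filter I) f • germVec U y ↔ ∀ᶠ i in U, x i = f i • y i := by
  simp only [funext_iff, eventually_all, Pi.smul_apply, germVec, smul_eq_mul, ← map_mul,
    coeRingHom_eq_iff, Pi.mul_apply]

theorem germVec_ne_zero {ι : Type*} [Finite ι] {x : I → ι → ℂ} (h : ∀ᶠ i in U, x i ≠ 0) :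
    germVec U x ≠ 0 := by
  intro h0
  have h1 : germVec U x = Germ.coeRingHom (U : Filter I) (0 : I → ℂ) • germVec U x := by
    rw [map_zero, zero_smul, h0]
  rw [germVec_eq_smul_iff] at h1
  obtain ⟨i, hi, hi'⟩ := (h.and h1).exists
  exact hi (by simpa using hi')

/-- Evaluation of polynomials along a family of points, as germs. -/
def evalGerm {σ : Type*} (U : Ultrafilter I) (p : I → σ → ℂ) :
    MvPolynomial σ ℂ →+* Germ (U : Filter I) ℂ :=
  (Germ.coeRingHom (U : Filter I)).comp (RingHom.pi fun i => eval (p i))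

theorem evalGerm_apply {σ : Type*} (p : I → σ → ℂ) (F : MvPolynomial σ ℂ) :
    evalGerm U p F = Germ.coeRingHom (U : Filter I) fun i => eval (p i) F := rfl

theorem evalGerm_X {σ : Type*} (p : I → σ → ℂ) (s : σ) :
    evalGerm U p (X s) = Germ.coeRingHom (U : Filter I) fun i => p i s := by
  simp [evalGerm_apply]

theorem evalGerm_injective {σ : Type*} {p : I → σ → ℂ}
    (h : ∀ F : MvPolynomial σ ℂ, F ≠ 0 → ∀ᶠ i in U, eval (p i) F ≠ 0) :
    Function.Injective (evalGerm U p) := by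
  rw [injective_iff_map_eq_zero]
  intro F hF
  by_contra hne
  rw [evalGerm_apply, ← map_zero (Germ.coeRingHom (U : Filter I)), coeRingHom_eq_iff] at hF
  obtain ⟨i, hi, hi'⟩ := (hF.and (h F hne)).exists
  exact hi' hi

theorem Good.indep_smul {ι α β γ K : Type*} [Fintype ι] [Field K] {u : ι → α → K} {v : ι → β → K}
    {w : ι → γ → K} (hg : Good u v w) (hu : ∀ i, u i ≠ 0) (hv : ∀ i, v i ≠ 0) (hw : ∀ i, w i ≠ 0)
    {t : ι → K} (ht : ∀ r s q, ∑ i, t i * (u i r * v i s * w i q) = 0) (i : ι) : t i = 0 := by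
  obtain ⟨l, m, h1, h2, h3⟩ := (hg.indep (fun i => t i • u i) 0 0 (by
    funext r s q
    simpa [tangentSum, mul_assoc] using ht r s q) i).2 (hw i)
  have hm : m = 0 := (smul_eq_zero.mp h2.symm).resolve_right (hv i)
  have hl : l = 0 := by
    have := (smul_eq_zero.mp h3.symm).resolve_right (hw i)
    simpa [hm] using this
  exact (smul_eq_zero.mp (h1.trans (by rw [hl, zero_smul]))).resolve_right (hu i)

/-- Along a generic ultrafilter, a family of configurations is eventually rigid. -/
theorem eventually_isRigidPoint (hA : 4 ≤ A) (hAB : A ≤ B) (hBC : B ≤ C)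
    (hk : k * (A + B + C - 2) + C * (A + B + C - 2) ≤ A * B * C) (p : I → Coord A B C k → ℂ)
    (h : ∀ F : MvPolynomial (Coord A B C k) ℂ, F ≠ 0 → ∀ᶠ i in U, eval (p i) F ≠ 0) :
    ∀ᶠ i in U, IsRigidPoint (p i) := by
  have hinj := evalGerm_injective h
  have hg := good_generic hA hAB hBC hk (evalGerm U p) hinj
  have hu : ∀ i, (fun x => evalGerm U p (genericLeft A B C k i x)) ≠ 0 := fun i h0 =>
    X_ne_zero (R := ℂ) _ ((map_eq_zero_iff _ hinj).mp (congrFun h0 ⟨0, by omega⟩))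
  have hv : ∀ i, (fun y => evalGerm U p (genericMid A B C k i y)) ≠ 0 := fun i h0 =>
    X_ne_zero (R := ℂ) _ ((map_eq_zero_iff _ hinj).mp (congrFun h0 ⟨0, by omega⟩))
  have hw : ∀ i, (fun z => evalGerm U p (genericRight A B C k i z)) ≠ 0 := fun i h0 =>
    X_ne_zero (R := ℂ) _ ((map_eq_zero_iff _ hinj).mp (congrFun h0 ⟨0, by omega⟩))
  have h1 : ∀ᶠ i in U, ∀ j : Fin k, (fun x => p i (.inl (j, x))) ≠ 0 := by
    rw [eventually_all]
    intro j
    filter_upwards [h (X (.inl (j, ⟨0, by omega⟩))) (X_ne_zero _)] with i hi h0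
    exact hi (by simpa using congrFun h0 ⟨0, by omega⟩)
  have h2 : ∀ᶠ i in U, ∀ j : Fin k, (fun x => p i (.inr (.inl (j, x)))) ≠ 0 := by
    rw [eventually_all]
    intro j
    filter_upwards [h (X (.inr (.inl (j, ⟨0, by omega⟩)))) (X_ne_zero _)] with i hi h0
    exact hi (by simpa using congrFun h0 ⟨0, by omega⟩)
  have h3 : ∀ᶠ i in U, ∀ j : Fin k, (fun x => p i (.inr (.inr (j, x)))) ≠ 0 := by
    rw [eventually_all]
    intro j
    filter_upwards [h (X (.inr (.inr (j, ⟨0, by omega⟩)))) (X_ne_zero _)] with i hi h0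
    exact hi (by simpa using congrFun h0 ⟨0, by omega⟩)
  have h4 : ∀ᶠ i in U, ∀ j : Fin k, ∀ t : Fin k → ℂ, (∀ r s q, ∑ m, t m *
      (p i (.inl (m, r)) * p i (.inr (.inl (m, s))) * p i (.inr (.inr (m, q)))) = 0) →
      t j = 0 := by
    rw [eventually_all]
    intro j
    by_contra hcon
    rw [← Ultrafilter.eventually_not] at hcon
    push Not at hcon
    obtain ⟨t, ht⟩ := hcon.choice
    have ht0 := hg.indep_smul hu hv hw
      (t := fun m => Germ.coeRingHom (U : Filter I) fun i => t i m) (by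
        intro r s q
        simp only [genericLeft, genericMid, genericRight, evalGerm_X, ← map_mul, ← map_sum]
        rw [← map_zero (Germ.coeRingHom (U : Filter I)), coeRingHom_eq_iff]
        filter_upwards [ht] with i hi
        simpa using hi.1 r s q) j
    rw [← map_zero (Germ.coeRingHom (U : Filter I)), coeRingHom_eq_iff] at ht0
    obtain ⟨i, hi, hi'⟩ := (ht0.and ht).exists
    exact hi'.2 hi
  have h5 : ∀ᶠ i in U, ∀ j : Fin k,
      ∀ (x : Fin k → Fin A → ℂ) (y : Fin k → Fin B → ℂ) (z : Fin k → Fin C → ℂ),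
      (∀ i, x i ≠ 0) → (∀ i, y i ≠ 0) → (∀ i, z i ≠ 0) →
      (∀ r s q, ∑ i, x i r * y i s * z i q =
        ∑ m, p i (.inl (m, r)) * p i (.inr (.inl (m, s))) * p i (.inr (.inr (m, q)))) →
      ∃ m, ∃ l₁ l₂ l₃ : ℂ, x j = l₁ • (fun r => p i (.inl (m, r))) ∧
        y j = l₂ • (fun s => p i (.inr (.inl (m, s)))) ∧
        z j = l₃ • (fun q => p i (.inr (.inr (m, q)))) := by
    rw [eventually_all]
    intro j
    by_contra hcon
    rw [← Ultrafilter.eventually_not] at hcon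
    have hcon' : ∀ᶠ i in U, ∃ t : (Fin k → Fin A → ℂ) × (Fin k → Fin B → ℂ) × (Fin k → Fin C → ℂ),
        (∀ m, t.1 m ≠ 0) ∧ (∀ m, t.2.1 m ≠ 0) ∧ (∀ m, t.2.2 m ≠ 0) ∧
        (∀ r s q, ∑ m, t.1 m r * t.2.1 m s * t.2.2 m q =
          ∑ m, p i (.inl (m, r)) * p i (.inr (.inl (m, s))) * p i (.inr (.inr (m, q)))) ∧
        ¬ ∃ m, ∃ l₁ l₂ l₃ : ℂ, t.1 j = l₁ • (fun r => p i (.inl (m, r))) ∧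
          t.2.1 j = l₂ • (fun s => p i (.inr (.inl (m, s)))) ∧
          t.2.2 j = l₃ • (fun q => p i (.inr (.inr (m, q)))) := by
      filter_upwards [hcon] with i hi
      by_contra hne
      exact hi fun x y z e1 e2 e3 e4 => by_contra fun e5 => hne ⟨(x, y, z), e1, e2, e3, e4, e5⟩
    obtain ⟨t, ht⟩ := hcon'.choice
    obtain ⟨m, l₁, l₂, l₃, e1, e2, e3⟩ := exists_proportional_of_good (evalGerm U p) hinj hg hw
      (x := fun m => germVec U fun i => (t i).1 m) (y := fun m => germVec U fun i => (t i).2.1 m)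
      (z := fun m => germVec U fun i => (t i).2.2 m)
      (fun m => germVec_ne_zero (ht.mono fun i hi => hi.1 m))
      (fun m => germVec_ne_zero (ht.mono fun i hi => hi.2.1 m))
      (fun m => germVec_ne_zero (ht.mono fun i hi => hi.2.2.1 m)) (by
        intro r s q
        simp only [genericLeft, genericMid, genericRight, evalGerm_X, germVec, ← map_mul,
          ← map_sum]
        rw [coeRingHom_eq_iff]
        filter_upwards [ht] with i hi
        simpa using hi.2.2.2.1 r s q) j
    obtain ⟨f₁, rfl⟩ := coeRingHom_surjective l₁
    obtain ⟨f₂, rfl⟩ := coeRingHom_surjective l₂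
    obtain ⟨f₃, rfl⟩ := coeRingHom_surjective l₃
    simp only [genericLeft, genericMid, genericRight, evalGerm_X] at e1 e2 e3
    have e1' := (germVec_eq_smul_iff (y := fun i r => p i (.inl (m, r)))).mp e1
    have e2' := (germVec_eq_smul_iff (y := fun i r => p i (.inr (.inl (m, r))))).mp e2
    have e3' := (germVec_eq_smul_iff (y := fun i r => p i (.inr (.inr (m, r))))).mp e3
    obtain ⟨i, hi, hi₁, hi₂, hi₃⟩ := (ht.and (e1'.and (e2'.and e3'))).exists
    exact hi.2.2.2.2 ⟨m, f₁ i, f₂ i, f₃ i, hi₁, hi₂, hi₃⟩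
  filter_upwards [h1, h2, h3, h4, h5] with i e1 e2 e3 e4 e5
  exact ⟨e1, e2, e3, e4, e5⟩

/-- The general configuration is rigid. -/
theorem exists_polynomial_isRigidPoint (hA : 4 ≤ A) (hAB : A ≤ B) (hBC : B ≤ C)
    (hk : k * (A + B + C - 2) + C * (A + B + C - 2) ≤ A * B * C) :
    ∃ F : MvPolynomial (Coord A B C k) ℂ, F ≠ 0 ∧ ∀ p, eval p F ≠ 0 → IsRigidPoint p := by
  by_contra! hcon
  obtain ⟨U, hU⟩ := exists_generic_ultrafilter
    (Subtype.val : {p : Coord A B C k → ℂ // ¬ IsRigidPoint p} → _) fun F hF => by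
      obtain ⟨p, hp, hp'⟩ := hcon F hF
      exact ⟨⟨p, hp'⟩, hp⟩
  obtain ⟨i, hi⟩ := (eventually_isRigidPoint hA hAB hBC hk _ hU).exists
  exact i.2 hi

end Ultraproduct

section Bridge

open MvPolynomial

variable {a b c k : ℕ}

/-- The coordinate functional on tensors indexed by `f`. -/
def tensorCoord {q : ℕ} {a : Fin q → ℕ} (f : BIdx q a) : Ten q a →ₗ[ℂ] ℂ :=
  PiTensorProduct.lift
    ((MultilinearMap.mkPiAlgebra ℂ (Fin q) ℂ).compLinearMap fun j => LinearMap.proj (f j))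

theorem tensorCoord_tprod {q : ℕ} {a : Fin q → ℕ} (f : BIdx q a)
    (v : ∀ j : Fin q, Fin (a j + 1) → ℂ) : tensorCoord f (tprod ℂ v) = ∏ j, v j (f j) := by
  simp [tensorCoord]

/-- The index of a coordinate on tensors with three factors. -/
def tripleIndex (r : Fin (a + 1)) (s : Fin (b + 1)) (q : Fin (c + 1)) : BIdx 3 ![a, b, c]
  | 0 => r
  | 1 => s
  | 2 => q

theorem tensorCoord_tripleIndex (r : Fin (a + 1)) (s : Fin (b + 1)) (q : Fin (c + 1))
    (v : ∀ j : Fin 3, Fin (![a, b, c] j + 1) → ℂ) :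
    tensorCoord (tripleIndex r s q) (tprod ℂ v) = v 0 r * v 1 s * v 2 q := by
  rw [tensorCoord_tprod, Fin.prod_univ_three]
  rfl

/-- Coordinates of triples as coordinates on the parameter space. -/
def coordToWIdx : Coord (a + 1) (b + 1) (c + 1) k → WIdx 3 ![a, b, c] k
  | .inl s => (s.1, ⟨0, s.2⟩)
  | .inr (.inl s) => (s.1, ⟨1, s.2⟩)
  | .inr (.inr s) => (s.1, ⟨2, s.2⟩)

/-- A point of the parameter space with prescribed coordinates. -/
def pointOfCoord (f : Coord (a + 1) (b + 1) (c + 1) k → ℂ) (i : Fin k) :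
    ∀ j : Fin 3, Fin (![a, b, c] j + 1) → ℂ
  | 0 => fun r => f (.inl (i, r))
  | 1 => fun s => f (.inr (.inl (i, s)))
  | 2 => fun q => f (.inr (.inr (i, q)))

/-- The factors of a point of the parameter space form a rigid configuration. -/
def IsRigidFactors (p : Fin k → ∀ j : Fin 3, Fin (![a, b, c] j + 1) → ℂ) : Prop :=
  IsRigid (A := a + 1) (B := b + 1) (C := c + 1) (fun i => p i 0) (fun i => p i 1) (fun i => p i 2)

theorem evalW_rename (F : MvPolynomial (Coord (a + 1) (b + 1) (c + 1) k) ℂ)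
    (p : Fin k → ∀ j : Fin 3, Fin (![a, b, c] j + 1) → ℂ) :
    evalW (rename coordToWIdx F) p =
      eval (fun s => p (coordToWIdx s).1 (coordToWIdx s).2.1 (coordToWIdx s).2.2) F := by
  rw [evalW, eval_rename]
  rfl

theorem sum_fiber_eq_one_imp_bijective {m : Fin k → Fin k} {t : Fin k → ℂ}
    (h : ∀ i, ∑ j with m j = i, t j = 1) : Function.Bijective m ∧ ∀ j, t j = 1 := by
  have hsurj : Function.Surjective m := by
    intro i
    by_contra! hi
    have := h i
    rw [Finset.filter_false_of_mem fun j _ => hi j] at this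
    simp at this
  have hbij := Finite.injective_iff_bijective.mp (Finite.injective_iff_surjective.mpr hsurj)
  refine ⟨hbij, fun j => ?_⟩
  have := h (m j)
  rwa [show (Finset.univ.filter fun j' => m j' = m j) = {j} by
    ext j'; simp [hbij.1.eq_iff], Finset.sum_singleton] at this

theorem IsRigidFactors.map_eq {p : Fin k → ∀ j : Fin 3, Fin (![a, b, c] j + 1) → ℂ}
    (hp : IsRigidFactors p) {t : Fin k → Ten 3 ![a, b, c]} (ht : ∀ i, IsDecomposable (t i))
    (hsum : ∑ i, t i = Phi _ p) :
    Finset.univ.val.map t = Finset.univ.val.map fun i => tprod ℂ (p i) := by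
  choose v hv htv using ht
  have hcoord : ∀ (r : Fin (a + 1)) (s : Fin (b + 1)) (q : Fin (c + 1)),
      ∑ i, v i 0 r * v i 1 s * v i 2 q = ∑ i, p i 0 r * p i 1 s * p i 2 q := by
    intro r s q
    have := congrArg (tensorCoord (tripleIndex r s q)) hsum
    simpa only [Phi, htv, map_sum, tensorCoord_tripleIndex] using this
  choose m l₁ l₂ l₃ e₁ e₂ e₃ using fun j => hp.proportional j (fun i => v i 0) (fun i => v i 1)
    (fun i => v i 2) (fun i => hv i 0) (fun i => hv i 1) (fun i => hv i 2) hcoord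
  have hfib : ∀ i, ∑ j with m j = i, l₁ j * l₂ j * l₃ j = 1 := by
    intro i
    rw [← sub_eq_zero]
    refine hp.indep i (fun i => ∑ j with m j = i, l₁ j * l₂ j * l₃ j - 1) fun r s q => ?_
    simp only [sub_mul, one_mul, Finset.sum_sub_distrib, sub_eq_zero]
    rw [← hcoord, ← Finset.sum_fiberwise Finset.univ m fun j => v j 0 r * v j 1 s * v j 2 q]
    refine Finset.sum_congr rfl fun i _ => ?_
    rw [Finset.sum_mul]
    refine Finset.sum_congr rfl fun j hj => ?_
    obtain rfl := (Finset.mem_filter.mp hj).2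
    have h₁ : v j 0 r = l₁ j * p (m j) 0 r := congrFun (e₁ j) r
    have h₂ : v j 1 s = l₂ j * p (m j) 1 s := congrFun (e₂ j) s
    have h₃ : v j 2 q = l₃ j * p (m j) 2 q := congrFun (e₃ j) q
    rw [h₁, h₂, h₃]
    ring
  obtain ⟨hbij, hone⟩ := sum_fiber_eq_one_imp_bijective hfib
  have ht : t = (fun i => tprod ℂ (p i)) ∘ m := by
    funext j
    have hvj : v j = fun i => ![l₁ j, l₂ j, l₃ j] i • p (m j) i := by
      funext i
      fin_cases i
      · exact e₁ j
      · exact e₂ j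
      · exact e₃ j
    rw [htv, hvj, MultilinearMap.map_smul_univ, Fin.prod_univ_three]
    change (l₁ j * l₂ j * l₃ j) • _ = _
    rw [hone, one_smul]
    rfl
  rw [ht, ← Multiset.map_map]
  congr 1
  exact Multiset.map_univ_val_equiv (Equiv.ofBijective m hbij)

theorem identifiable_of_le (ha : 3 ≤ a) (hab : a ≤ b) (hbc : b ≤ c)
    (hk : k * (a + b + c + 1) + (c + 1) * (a + b + c + 1) ≤ (a + 1) * (b + 1) * (c + 1)) :
    Identifiable 3 ![a, b, c] k := by
  obtain ⟨F, hF, hrigid⟩ := exists_polynomial_isRigidPoint (A := a + 1) (B := b + 1) (C := c + 1)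
    (k := k) (by omega) (by omega) (by omega)
    (by rwa [show a + 1 + (b + 1) + (c + 1) - 2 = a + b + c + 1 by omega])
  refine ⟨rename coordToWIdx F, ?_, fun p hp => ?_⟩
  · obtain ⟨f, hf⟩ : ∃ f, eval f F ≠ 0 := by
      by_contra! h
      exact hF (MvPolynomial.funext fun f => by rw [h, map_zero])
    refine ⟨pointOfCoord f, ?_⟩
    rwa [evalW_rename, show (fun s => pointOfCoord f (coordToWIdx s).1 (coordToWIdx s).2.1
      (coordToWIdx s).2.2) = f by funext s; rcases s with s | s | s <;> rfl]
  · rw [evalW_rename] at hp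
    have hp' : IsRigidFactors p := hrigid _ hp
    refine ⟨⟨fun i => tprod ℂ (p i), fun i => ⟨p i, fun j => ?_, rfl⟩, rfl⟩,
      fun s t hs ht hs' ht' => (hp'.map_eq hs hs').trans (hp'.map_eq ht ht').symm⟩
    fin_cases j
    · exact hp'.left_ne i
    · exact hp'.mid_ne i
    · exact hp'.right_ne i

end Bridge
end SegreContact

/-- `ℙ^a × ℙ^b × ℙ^c`, `2 < a ≤ b ≤ c`, is `k`-identifiable
for `k ≤ (a+1)(b+1)(c+1)/(a+b+c+1) - c - 1`. -/
theorem stmt_12 (a b c : ℕ) (ha : 2 < a) (hab : a ≤ b) (hbc : b ≤ c)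
    (k : ℕ) (hk : 0 < k)
    (hkb : (k : ℚ) ≤ ((a : ℚ) + 1) * ((b : ℚ) + 1) * ((c : ℚ) + 1) /
      ((a : ℚ) + b + c + 1) - c - 1) :
    Identifiable 3 ![a, b, c] k := by
  refine SegreContact.identifiable_of_le (by omega) hab hbc ?_
  have hpos : (0 : ℚ) < (a : ℚ) + b + c + 1 := by positivity
  have h : ((k : ℚ) + (c + 1)) ≤
      ((a : ℚ) + 1) * ((b : ℚ) + 1) * ((c : ℚ) + 1) / ((a : ℚ) + b + c + 1) := by linarith
  rw [le_div_iff₀ hpos, add_mul] at h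
  exact_mod_cast h
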